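/- arXiv:0708.3608 — 2 statements merged into one kernel-verified Lean document; each statement's English description precedes it below -/
import Mathlib

section
/- Let f : [0,1] → ℕ∞ be a preindicatrix. Then there exists a continuous function F : [0,1] → [0,1] with F(0) = 0 and F(1) = 1 such that for every y ∈ [0,1] the section F⁻¹(y) is countable and its extended natural cardinality equals f(y) (that is, F⁻¹(y) has exactly n elements when f(y) = n ∈ ℕ, and F⁻¹(y) is countably infinite when f(y) = ∞). -/
open Set

noncomputable section

/-- The section of `F` over `y`: the set of `x ∈ [0,1]` with `F x = y`. -/
def Sec (F : ℝ → ℝ) (y : ℝ) : Set ℝ := {x | x ∈ Set.Icc (0:ℝ) 1 ∧ F x = y}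

/-- Condition (1) for an `ℕ∞`-valued function `f` on `[0,1]`. -/
def Cond1 (f : ℝ → ℕ∞) : Prop :=
  (∀ y ∈ Set.Ioo (0:ℝ) 1, f y ≠ ⊤ →
    ∃ ε > 0, ∀ y₁ ∈ Set.Icc (0:ℝ) 1, ∀ y₂ ∈ Set.Icc (0:ℝ) 1,
      y - ε < y₁ → y₁ < y → y < y₂ → y₂ < y + ε →
      2 * f y ≤ f y₁ + f y₂ ∧
      (f y₁ + f y₂ = 2 * f y →
        (∃ k : ℕ, f y₁ = k ∧ Odd k) ∧ (∃ k : ℕ, f y₂ = k ∧ Odd k))) ∧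
  (f 0 ≠ ⊤ → ∃ ε > 0, ∀ y₂ ∈ Set.Icc (0:ℝ) 1, 0 < y₂ → y₂ < ε →
    2 * f 0 ≤ 1 + f y₂) ∧
  (f 1 ≠ ⊤ → ∃ ε > 0, ∀ y₁ ∈ Set.Icc (0:ℝ) 1, 1 - ε < y₁ → y₁ < 1 →
    2 * f 1 ≤ f y₁ + 1)

/-- Condition (**) for an `ℕ∞`-valued function `f` at the point `y ∈ [0,1]`,
with the convention that the term `f y₁` is replaced by `1` when `y = 0` and
the term `f y₂` is replaced by `1` when `y = 1`. -/
def CondStar (f : ℝ → ℕ∞) (y : ℝ) : Prop :=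
  ∀ n : ℕ, ∃ ε > 0,
    (∀ y₁ ∈ Set.Icc (0:ℝ) 1, ∀ y₂ ∈ Set.Icc (0:ℝ) 1,
      y - ε < y₁ → y₁ < y → y < y₂ → y₂ < y + ε → (n : ℕ∞) ≤ f y₁ + f y₂) ∧
    (y = 0 → ∀ y₂ ∈ Set.Icc (0:ℝ) 1, 0 < y₂ → y₂ < ε → (n : ℕ∞) ≤ 1 + f y₂) ∧
    (y = 1 → ∀ y₁ ∈ Set.Icc (0:ℝ) 1, 1 - ε < y₁ → y₁ < 1 → (n : ℕ∞) ≤ f y₁ + 1)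

/-- A preindicatrix: an `ℕ∞`-valued function on `[0,1]` with values `≥ 1`,
satisfying Condition (1) and Condition (**) at every `y` with `f y = ∞`. -/
def Preindicatrix (f : ℝ → ℕ∞) : Prop :=
  (∀ y ∈ Set.Icc (0:ℝ) 1, 1 ≤ f y) ∧ Cond1 f ∧
    (∀ y ∈ Set.Icc (0:ℝ) 1, f y = ⊤ → CondStar f y)

/-!
If `F` is obtained from a monotone function by replacing a plateau at height `c` by a path that
climbs to `b`, dives to `a` and returns to `c`, with `a < c < b`, then the fibre over `y` gains one
point for each of the relations `a < y ≤ b` and `a ≤ y < b`. Plateaus can be inserted at countably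
many heights at once, and `F` stays continuous if only finitely many of the intervals `[a, b]` are
longer than any given `ε > 0`. So `f y` has to be written as `1` plus the number of intervals with
`y ∈ (a, b]` plus the number of those with `y ∈ [a, b)`.

To this end `f` is cut into layers of height `2`. Among the layers that are full just to the left of
`y` and those that are full just to the right of `y`, conditions (1) and (**) leave room to choose
`f y - 1` of them so that every layer full around `y` is chosen twice. For each layer, the points
`y` for which it is chosen on the left, resp. on the right, are those in `(a, b]`, resp. `[a, b)`,
for a family of nonoverlapping intervals, which may be taken as short as desired.
-/

open Filter MeasureTheory Topology

section Gaps

lemma exists_monotone_finset_of_countable {α : Type*} {s : Set α} (hs : s.Countable) :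
    ∃ D : ℕ → Finset α, Monotone D ∧ ∀ x ∈ s, ∃ n, x ∈ D n := by
  classical
  obtain rfl | hne := s.eq_empty_or_nonempty
  · exact ⟨fun _ ↦ ∅, monotone_const, by simp⟩
  obtain ⟨e, rfl⟩ := hs.exists_eq_range hne
  refine ⟨fun n ↦ (Finset.range n).image e,
    fun m n hmn ↦ Finset.image_subset_image (Finset.range_mono hmn), ?_⟩
  rintro _ ⟨i, rfl⟩
  exact ⟨i + 1, Finset.mem_image_of_mem e (Finset.self_mem_range_succ i)⟩

variable {α : Type*} [LinearOrder α]

/-- The pair `p` consists of two consecutive elements of the finite set `D`. -/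
def IsGap (D : Finset α) (p : α × α) : Prop :=
  p.1 ∈ D ∧ p.2 ∈ D ∧ p.1 < p.2 ∧ ∀ d ∈ D, d ∉ Ioo p.1 p.2

lemma exists_isGap_mem_Ioc {D : Finset α} {s t y : α} (hs : s ∈ D) (ht : t ∈ D)
    (hy : y ∈ Ioc s t) : ∃ p, IsGap D p ∧ s ≤ p.1 ∧ p.2 ≤ t ∧ y ∈ Ioc p.1 p.2 := by
  obtain ⟨s', hs', hs'max⟩ := (D.filter (· < y)).exists_max_image id ⟨s, by simp [hs, hy.1]⟩
  obtain ⟨t', ht', ht'min⟩ := (D.filter (y ≤ ·)).exists_min_image id ⟨t, by simp [ht, hy.2]⟩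
  simp only [Finset.mem_filter, id, and_imp] at hs' hs'max ht' ht'min
  refine ⟨(s', t'), ⟨hs'.1, ht'.1, hs'.2.trans_le ht'.2, fun d hd hdst ↦ ?_⟩,
    hs'max s hs hy.1, ht'min t ht hy.2, hs'.2, ht'.2⟩
  rcases lt_or_ge d y with hdy | hdy
  · exact (hs'max d hd hdy).not_gt hdst.1
  · exact (ht'min d hd hdy).not_gt hdst.2

lemma exists_isGap_mem_Ico {D : Finset α} {s t y : α} (hs : s ∈ D) (ht : t ∈ D)
    (hy : y ∈ Ico s t) : ∃ p, IsGap D p ∧ s ≤ p.1 ∧ p.2 ≤ t ∧ y ∈ Ico p.1 p.2 := by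
  obtain ⟨s', hs', hs'max⟩ := (D.filter (· ≤ y)).exists_max_image id ⟨s, by simp [hs, hy.1]⟩
  obtain ⟨t', ht', ht'min⟩ := (D.filter (y < ·)).exists_min_image id ⟨t, by simp [ht, hy.2]⟩
  simp only [Finset.mem_filter, id, and_imp] at hs' hs'max ht' ht'min
  refine ⟨(s', t'), ⟨hs'.1, ht'.1, hs'.2.trans_lt ht'.2, fun d hd hdst ↦ ?_⟩,
    hs'max s hs hy.1, ht'min t ht hy.2, hs'.2, ht'.2⟩
  rcases le_or_gt d y with hdy | hdy
  · exact (hs'max d hd hdy).not_gt hdst.1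
  · exact (ht'min d hd hdy).not_gt hdst.2

lemma IsGap.le_of_not_disjoint {D E : Finset α} (hDE : D ⊆ E) {p q : α × α} (hp : IsGap D p)
    (hq : IsGap E q) (hpq : ¬ Disjoint (Ioc p.1 p.2) (Ioc q.1 q.2)) : p.1 ≤ q.1 ∧ q.2 ≤ p.2 := by
  obtain ⟨z, hzp, hzq⟩ := not_disjoint_iff.1 hpq
  constructor <;> by_contra! hlt
  · exact hq.2.2.2 _ (hDE hp.1) ⟨hlt, hzp.1.trans_le hzq.2⟩
  · exact hq.2.2.2 _ (hDE hp.2.1) ⟨hzq.1.trans_le hzp.2, hlt⟩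

/-- The gaps of `D 0, D 1, …` that satisfy `good` and do not meet an earlier such gap. When `D` is
increasing and `good` passes to subintervals, these are the maximal good gaps. -/
def firstGoodGaps (D : ℕ → Finset α) (good : α × α → Prop) : Set (α × α) :=
  {p | ∃ n, IsGap (D n) p ∧ good p ∧
    ∀ m < n, ∀ q, IsGap (D m) q → good q → Disjoint (Ioc p.1 p.2) (Ioc q.1 q.2)}

variable {D : ℕ → Finset α} {good : α × α → Prop}

lemma pairwiseDisjoint_firstGoodGaps :
    (firstGoodGaps D good).PairwiseDisjoint fun p ↦ Ioc p.1 p.2 := by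
  rintro p ⟨n, hp, hpgood, hpfirst⟩ q ⟨m, hq, hqgood, hqfirst⟩ hpq
  by_contra hmeet
  rcases lt_trichotomy m n with hmn | rfl | hmn
  · exact hmeet (hpfirst m hmn q hq hqgood)
  · have hqp := hp.le_of_not_disjoint subset_rfl hq hmeet
    have hpq' := hq.le_of_not_disjoint subset_rfl hp fun h ↦ hmeet h.symm
    exact hpq (Prod.ext (hqp.1.antisymm hpq'.1) (hpq'.2.antisymm hqp.2))
  · exact hmeet (hqfirst n hmn p hp hpgood).symm

lemma exists_mem_firstGoodGaps_of_isGap (hD : Monotone D) {n : ℕ} {p : α × α}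
    (hp : IsGap (D n) p) (hpgood : good p) :
    ∃ q ∈ firstGoodGaps D good, q.1 ≤ p.1 ∧ p.2 ≤ q.2 := by
  classical
  have hex : ∃ n q, IsGap (D n) q ∧ good q ∧ q.1 ≤ p.1 ∧ p.2 ≤ q.2 :=
    ⟨n, p, hp, hpgood, le_rfl, le_rfl⟩
  obtain ⟨q, hq, hqgood, hqp⟩ := Nat.find_spec hex
  refine ⟨q, ⟨_, hq, hqgood, fun m hm r hr hrgood ↦ ?_⟩, hqp⟩
  by_contra hmeet
  have hrq := hr.le_of_not_disjoint (hD hm.le) hq fun h ↦ hmeet h.symm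
  exact Nat.find_min hex hm ⟨r, hr, hrgood, hrq.1.trans hqp.1, hqp.2.trans hrq.2⟩

theorem exists_pairwiseDisjoint_cover {s : Set α} (hs : s.Countable)
    (good_mono : ∀ p q : α × α, q.1 ≤ p.1 → p.2 ≤ q.2 → good q → good p) :
    ∃ T : Set (α × α), (∀ p ∈ T, p.1 < p.2 ∧ good p) ∧
      (T.PairwiseDisjoint fun p ↦ Ioc p.1 p.2) ∧
      ∀ p : α × α, p.1 ∈ s → p.2 ∈ s → good p → ∀ y,
        (y ∈ Ioc p.1 p.2 → ∃ q ∈ T, y ∈ Ioc q.1 q.2) ∧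
        (y ∈ Ico p.1 p.2 → ∃ q ∈ T, y ∈ Ico q.1 q.2) := by
  obtain ⟨D, hD, hsD⟩ := exists_monotone_finset_of_countable hs
  refine ⟨firstGoodGaps D good, fun p ⟨_, hp, hpgood, _⟩ ↦ ⟨hp.2.2.1, hpgood⟩,
    pairwiseDisjoint_firstGoodGaps, fun p hp₁ hp₂ hpgood y ↦ ?_⟩
  obtain ⟨n₁, hn₁⟩ := hsD p.1 hp₁
  obtain ⟨n₂, hn₂⟩ := hsD p.2 hp₂
  have hp₁D : p.1 ∈ D (max n₁ n₂) := hD (le_max_left _ _) hn₁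
  have hp₂D : p.2 ∈ D (max n₁ n₂) := hD (le_max_right _ _) hn₂
  constructor <;> intro hy
  · obtain ⟨q, hq, hpq₁, hpq₂, hyq⟩ := exists_isGap_mem_Ioc hp₁D hp₂D hy
    obtain ⟨r, hr, hrq₁, hrq₂⟩ :=
      exists_mem_firstGoodGaps_of_isGap hD hq (good_mono q p hpq₁ hpq₂ hpgood)
    exact ⟨r, hr, Ioc_subset_Ioc hrq₁ hrq₂ hyq⟩
  · obtain ⟨q, hq, hpq₁, hpq₂, hyq⟩ := exists_isGap_mem_Ico hp₁D hp₂D hy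
    obtain ⟨r, hr, hrq₁, hrq₂⟩ :=
      exists_mem_firstGoodGaps_of_isGap hD hq (good_mono q p hpq₁ hpq₂ hpgood)
    exact ⟨r, hr, Ico_subset_Ico hrq₁ hrq₂ hyq⟩

end Gaps

section Tiling

variable {P Q : Set ℝ}

lemma countable_diff_of_eventually_nhdsLT (hP : ∀ y ∈ P, ∀ᶠ z in 𝓝[<] y, z ∈ P ∩ Q) :
    (P \ Q).Countable := by
  refine (countable_setOfPred_isolated_left_within (s := Qᶜ)).mono
    fun y hy ↦ mem_sep hy.2 ?_
  rw [inter_comm, nhdsWithin_inter', inf_principal_eq_bot, compl_compl]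
  exact (hP y hy.1).mono fun z hz ↦ hz.2

lemma countable_diff_of_eventually_nhdsGT (hQ : ∀ y ∈ Q, ∀ᶠ z in 𝓝[>] y, z ∈ P ∩ Q) :
    (Q \ P).Countable := by
  refine (countable_setOfPred_isolated_right_within (s := Pᶜ)).mono
    fun y hy ↦ mem_sep hy.2 ?_
  rw [inter_comm, nhdsWithin_inter', inf_principal_eq_bot, compl_compl]
  exact (hQ y hy.1).mono fun z hz ↦ hz.1

lemma exists_rat_Ico_subset {S : Set ℝ} {y ε : ℝ} (hε : 0 < ε) (hS : ∀ᶠ z in 𝓝[<] y, z ∈ S) :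
    ∃ r : ℚ, y - ε < r ∧ r < y ∧ Ico (r : ℝ) y ⊆ S := by
  obtain ⟨l, hl, hlS⟩ := (mem_nhdsLT_iff_exists_Ioo_subset' (sub_lt_self y hε)).1 hS
  obtain ⟨r, hlr, hry⟩ := exists_rat_btwn (max_lt hl (sub_lt_self y hε))
  exact ⟨r, (le_max_right _ _).trans_lt hlr, hry,
    fun z hz ↦ hlS ⟨((le_max_left _ _).trans_lt hlr).trans_le hz.1, hz.2⟩⟩

lemma exists_rat_Ioc_subset {S : Set ℝ} {y ε : ℝ} (hε : 0 < ε) (hS : ∀ᶠ z in 𝓝[>] y, z ∈ S) :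
    ∃ r : ℚ, y < r ∧ r < y + ε ∧ Ioc y (r : ℝ) ⊆ S := by
  obtain ⟨u, hu, huS⟩ := (mem_nhdsGT_iff_exists_Ioo_subset' (lt_add_of_pos_right y hε)).1 hS
  obtain ⟨r, hyr, hru⟩ := exists_rat_btwn (lt_min hu (lt_add_of_pos_right y hε))
  exact ⟨r, hyr, hru.trans_le (min_le_right _ _),
    fun z hz ↦ huS ⟨hz.1, hz.2.trans_lt (hru.trans_le (min_le_left _ _))⟩⟩

/-- The interval with endpoints `p` is a tile for `(P, Q)`: it is short and contributes its points
to `P` and `Q` with the half-open conventions under which a fold over it meets each level. -/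
def IsTile (P Q : Set ℝ) (δ : ℝ) (p : ℝ × ℝ) : Prop :=
  p.2 - p.1 ≤ δ ∧ Ioc p.1 p.2 ⊆ P ∧ Ico p.1 p.2 ⊆ Q

lemma IsTile.mono {δ : ℝ} {p q : ℝ × ℝ} (h₁ : q.1 ≤ p.1) (h₂ : p.2 ≤ q.2) (hq : IsTile P Q δ q) :
    IsTile P Q δ p :=
  ⟨by linarith [hq.1], (Ioc_subset_Ioc h₁ h₂).trans hq.2.1, (Ico_subset_Ico h₁ h₂).trans hq.2.2⟩

-- Rational endpoints suffice except at points of `P \ Q` and `Q \ P`, where the tile must end.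
lemma exists_isTile_around (hP : ∀ y ∈ P, ∀ᶠ z in 𝓝[<] y, z ∈ P ∩ Q)
    (hQ : ∀ y ∈ Q, ∀ᶠ z in 𝓝[>] y, z ∈ P ∩ Q) {δ : ℝ} (hδ : 0 < δ) {y : ℝ} (hy : y ∈ P ∪ Q) :
    ∃ s ∈ (P \ Q) ∪ (Q \ P) ∪ range ((↑) : ℚ → ℝ), ∃ t ∈ (P \ Q) ∪ (Q \ P) ∪ range ((↑) : ℚ → ℝ),
      IsTile P Q δ (s, t) ∧ s ≤ y ∧ y ≤ t ∧ (y ∈ P → s < y) ∧ (y ∈ Q → y < t) := by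
  obtain ⟨s, hs, hsδ, hsy, hsP, hsub⟩ : ∃ s ∈ (P \ Q) ∪ (Q \ P) ∪ range ((↑) : ℚ → ℝ),
      y - δ / 2 < s ∧ s ≤ y ∧ (y ∈ P ↔ s < y) ∧ Ico s y ⊆ P ∩ Q := by
    by_cases hyP : y ∈ P
    · obtain ⟨r, hr, hry, hsub⟩ := exists_rat_Ico_subset (half_pos hδ) (hP y hyP)
      exact ⟨r, .inr ⟨r, rfl⟩, hr, hry.le, by tauto, hsub⟩
    · exact ⟨y, .inl (.inr ⟨hy.resolve_left hyP, hyP⟩), by linarith, le_rfl, by simpa, by simp⟩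
  obtain ⟨t, ht, htδ, hyt, htQ, hsub'⟩ : ∃ t ∈ (P \ Q) ∪ (Q \ P) ∪ range ((↑) : ℚ → ℝ),
      t < y + δ / 2 ∧ y ≤ t ∧ (y ∈ Q ↔ y < t) ∧ Ioc y t ⊆ P ∩ Q := by
    by_cases hyQ : y ∈ Q
    · obtain ⟨r, hyr, hr, hsub'⟩ := exists_rat_Ioc_subset (half_pos hδ) (hQ y hyQ)
      exact ⟨r, .inr ⟨r, rfl⟩, hr, hyr.le, by tauto, hsub'⟩
    · exact ⟨y, .inl (.inl ⟨hy.resolve_right hyQ, hyQ⟩), by linarith, le_rfl, by simpa, by simp⟩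
  refine ⟨s, hs, t, ht, ⟨by linarith, fun z hz ↦ ?_, fun z hz ↦ ?_⟩, hsy, hyt, hsP.1, htQ.1⟩
  all_goals rcases lt_trichotomy z y with hzy | rfl | hzy
  · exact (hsub ⟨hz.1.le, hzy⟩).1
  · exact hsP.2 hz.1
  · exact (hsub' ⟨hzy, hz.2⟩).1
  · exact (hsub ⟨hz.1, hzy⟩).2
  · exact htQ.2 hz.2
  · exact (hsub' ⟨hzy, hz.2.le⟩).2

/-- `T` is a family of nonoverlapping, nondegenerate tiles for `(P, Q)` such that their intervals
`Ioc` exhaust `P` and their intervals `Ico` exhaust `Q`. -/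
structure IsTiling (P Q : Set ℝ) (δ : ℝ) (T : Set (ℝ × ℝ)) : Prop where
  lt : ∀ p ∈ T, p.1 < p.2
  isTile : ∀ p ∈ T, IsTile P Q δ p
  pairwiseDisjoint : T.PairwiseDisjoint fun p ↦ Ioc p.1 p.2
  exists_mem_Ioc : ∀ y ∈ P, ∃ p ∈ T, y ∈ Ioc p.1 p.2
  exists_mem_Ico : ∀ y ∈ Q, ∃ p ∈ T, y ∈ Ico p.1 p.2

theorem exists_isTiling (hP : ∀ y ∈ P, ∀ᶠ z in 𝓝[<] y, z ∈ P ∩ Q)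
    (hQ : ∀ y ∈ Q, ∀ᶠ z in 𝓝[>] y, z ∈ P ∩ Q) {δ : ℝ} (hδ : 0 < δ) :
    ∃ T, IsTiling P Q δ T := by
  have hcount : ((P \ Q) ∪ (Q \ P) ∪ range ((↑) : ℚ → ℝ)).Countable :=
    ((countable_diff_of_eventually_nhdsLT hP).union
      (countable_diff_of_eventually_nhdsGT hQ)).union (countable_range _)
  obtain ⟨T, hT, hdisj, hcover⟩ := exists_pairwiseDisjoint_cover hcount
    fun _ _ h₁ h₂ hq ↦ IsTile.mono (P := P) (Q := Q) (δ := δ) h₁ h₂ hq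
  refine ⟨T, fun p hp ↦ (hT p hp).1, fun p hp ↦ (hT p hp).2, hdisj, fun y hy ↦ ?_, fun y hy ↦ ?_⟩
  · obtain ⟨s, hs, t, ht, htile, -, hyt, hsy, -⟩ := exists_isTile_around hP hQ hδ (.inl hy)
    exact (hcover (s, t) hs ht htile y).1 ⟨hsy hy, hyt⟩
  · obtain ⟨s, hs, t, ht, htile, hsy, -, -, hyt⟩ := exists_isTile_around hP hQ hδ (.inr hy)
    exact (hcover (s, t) hs ht htile y).2 ⟨hsy, hyt hy⟩

namespace IsTiling

variable {δ : ℝ} {T : Set (ℝ × ℝ)} {y : ℝ}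

lemma exists_mem_Ioc_iff (hT : IsTiling P Q δ T) : (∃ p : T, y ∈ Ioc p.1.1 p.1.2) ↔ y ∈ P :=
  ⟨fun ⟨p, hp⟩ ↦ (hT.isTile p p.2).2.1 hp,
    fun hy ↦ (hT.exists_mem_Ioc y hy).elim fun p hp ↦ ⟨⟨p, hp.1⟩, hp.2⟩⟩

lemma exists_mem_Ico_iff (hT : IsTiling P Q δ T) : (∃ p : T, y ∈ Ico p.1.1 p.1.2) ↔ y ∈ Q :=
  ⟨fun ⟨p, hp⟩ ↦ (hT.isTile p p.2).2.2 hp,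
    fun hy ↦ (hT.exists_mem_Ico y hy).elim fun p hp ↦ ⟨⟨p, hp.1⟩, hp.2⟩⟩

lemma eq_of_mem_Ioc (hT : IsTiling P Q δ T) {p q : T} (hp : y ∈ Ioc p.1.1 p.1.2)
    (hq : y ∈ Ioc q.1.1 q.1.2) : p = q :=
  Subtype.ext (hT.pairwiseDisjoint.elim_set p.2 q.2 y hp hq)

lemma eq_of_mem_Ico (hT : IsTiling P Q δ T) {p q : T} (hp : y ∈ Ico p.1.1 p.1.2)
    (hq : y ∈ Ico q.1.1 q.1.2) : p = q := by
  have hmem : min p.1.2 q.1.2 ∈ Ioc p.1.1 p.1.2 ∩ Ioc q.1.1 q.1.2 :=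
    ⟨⟨lt_min (hT.lt p p.2) (hp.1.trans_lt hq.2), min_le_left _ _⟩,
      ⟨lt_min (hq.1.trans_lt hp.2) (hT.lt q q.2), min_le_right _ _⟩⟩
  exact hT.eq_of_mem_Ioc hmem.1 hmem.2

lemma Icc_subset (hT : IsTiling P Q δ T) (p : T) : Icc p.1.1 p.1.2 ⊆ P ∪ Q := by
  rw [← Ico_union_right (hT.lt p p.2).le, union_comm]
  exact union_subset_union
    (singleton_subset_iff.2 ((hT.isTile p p.2).2.1 (right_mem_Ioc.2 (hT.lt p p.2))))
    (hT.isTile p p.2).2.2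

lemma finite_setOf_le (hT : IsTiling P Q δ T) (hP : volume P ≠ ⊤) {ε : ℝ} (hε : 0 < ε) :
    {p : T | ε ≤ p.1.2 - p.1.1}.Finite := by
  have hfin := Measure.finite_const_le_meas_of_disjoint_iUnion volume (ENNReal.ofReal_pos.2 hε)
    (As := fun p : T ↦ Ioc p.1.1 p.1.2) (fun _ ↦ measurableSet_Ioc)
    (fun p q hpq ↦ hT.pairwiseDisjoint p.2 q.2 (Subtype.coe_ne_coe.2 hpq))
    (measure_ne_top_of_subset (iUnion_subset fun p ↦ (hT.isTile p p.2).2.1) hP)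
  refine hfin.subset fun p hp ↦ ?_
  rw [mem_ofPred_eq, Real.volume_Ioc]
  exact ENNReal.ofReal_le_ofReal hp

end IsTiling

end Tiling

section Collapse

lemma exists_isFiniteMeasure_null_iff_disjoint {α : Type*} [MeasurableSpace α]
    [MeasurableSingletonClass α] {C : Set α} (hC : C.Countable) :
    ∃ μ : Measure α, IsFiniteMeasure μ ∧ ∀ s, μ s = 0 ↔ Disjoint s C := by
  have := hC.to_subtype
  refine ⟨(Measure.sum fun c : C ↦ Measure.dirac (c : α)).toFinite, inferInstance, fun s ↦ ?_⟩
  rw [toFinite_apply_eq_zero_iff, Measure.sum_apply_of_countable, ENNReal.tsum_eq_zero]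
  simp only [Measure.dirac_apply, indicator_apply_eq_zero, Pi.one_apply, one_ne_zero, imp_false,
    Subtype.forall, disjoint_right]

variable (μ : Measure ℝ)

/-- The position of `y` after a gap of length `μ {c}` has been inserted at every atom `c < y`. -/
def plateauStart (y : ℝ) : ℝ := y + μ.real (Iio y)

/-- The right end of the gap inserted at `y`, whose left end is `plateauStart μ y`. -/
def plateauEnd (y : ℝ) : ℝ := y + μ.real (Iic y)

variable [IsFiniteMeasure μ]

lemma plateauEnd_eq (y : ℝ) : plateauEnd μ y = plateauStart μ y + μ.real {y} := by
  rw [plateauEnd, plateauStart, ← Iio_union_right, measureReal_union (by simp) (by simp), add_assoc]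

lemma plateauStart_le_plateauEnd (y : ℝ) : plateauStart μ y ≤ plateauEnd μ y := by
  rw [plateauEnd_eq]
  exact le_add_of_nonneg_right measureReal_nonneg

lemma plateauEnd_add_le {y y' : ℝ} (h : y < y') :
    plateauEnd μ y + (y' - y) ≤ plateauStart μ y' := by
  have : μ.real (Iic y) ≤ μ.real (Iio y') := measureReal_mono (Iic_subset_Iio.2 h)
  unfold plateauEnd plateauStart
  linarith

lemma strictMono_plateauStart : StrictMono (plateauStart μ) := fun y y' h ↦ by
  linarith [plateauEnd_add_le μ h, plateauStart_le_plateauEnd μ y]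

lemma plateauStart_le_of_forall_lt {x y : ℝ} (h : ∀ z < y, plateauStart μ z ≤ x) :
    plateauStart μ y ≤ x := by
  obtain ⟨u, hu, huy, hulim⟩ := exists_seq_strictMono_tendsto y
  have hmeas : Tendsto (fun n ↦ μ (Iio (u n))) atTop (𝓝 (μ (Iio y))) := by
    rw [← (isLUB_of_tendsto_atTop hu.monotone hulim).iUnion_Iio_eq]
    exact tendsto_measure_iUnion_atTop fun m n hmn ↦ Iio_subset_Iio (hu.monotone hmn)
  exact le_of_tendsto' (hulim.add ((ENNReal.tendsto_toReal (measure_ne_top μ _)).comp hmeas))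
    fun n ↦ h _ (huy n)

lemma le_plateauEnd_of_forall_gt {x y : ℝ} (h : ∀ z > y, x ≤ plateauStart μ z) :
    x ≤ plateauEnd μ y := by
  have hmeas : Tendsto (fun z ↦ μ (Iic z)) (𝓝[>] y) (𝓝 (μ (Iic y))) := by
    have hinter : ⋂ r > y, Iic r = Iic y := by
      ext z
      simpa using ⟨le_of_forall_gt_imp_ge_of_dense, fun hz r hr ↦ hz.trans hr.le⟩
    rw [← hinter]
    exact tendsto_measure_biInter_gt (fun _ _ ↦ measurableSet_Iic.nullMeasurableSet)
      (fun _ _ _ ↦ Iic_subset_Iic.2) ⟨y + 1, by simp, measure_ne_top _ _⟩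
  refine ge_of_tendsto ((tendsto_nhdsWithin_of_tendsto_nhds tendsto_id).add
    ((ENNReal.tendsto_toReal (measure_ne_top μ _)).comp hmeas)) ?_
  filter_upwards [self_mem_nhdsWithin] with z hz
  exact (h z hz).trans (plateauStart_le_plateauEnd μ z)

lemma exists_mem_Icc_plateau (x : ℝ) : ∃ y, x ∈ Icc (plateauStart μ y) (plateauEnd μ y) := by
  have hne : {y | plateauStart μ y ≤ x}.Nonempty := by
    refine ⟨x - μ.real univ, ?_⟩
    have : μ.real (Iio (x - μ.real univ)) ≤ μ.real univ := measureReal_mono (subset_univ _)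
    simp only [mem_ofPred_eq, plateauStart]
    linarith
  have hbdd : BddAbove {y | plateauStart μ y ≤ x} :=
    ⟨x, fun y hy ↦ (le_add_of_nonneg_right measureReal_nonneg).trans hy⟩
  refine ⟨sSup {y | plateauStart μ y ≤ x}, plateauStart_le_of_forall_lt μ fun z hz ↦ ?_,
    le_plateauEnd_of_forall_gt μ fun z hz ↦ ?_⟩
  · obtain ⟨y, hy, hzy⟩ := exists_lt_of_lt_csSup hne hz
    exact ((strictMono_plateauStart μ) hzy).le.trans hy
  · by_contra! hzx
    exact hz.not_ge (le_csSup hbdd hzx.le)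

/-- The monotone map of the line that crushes the plateau of every `y` back to `y`. -/
def collapse (x : ℝ) : ℝ := (exists_mem_Icc_plateau μ x).choose

lemma collapse_eq_iff {x y : ℝ} :
    collapse μ x = y ↔ x ∈ Icc (plateauStart μ y) (plateauEnd μ y) := by
  have hx : x ∈ Icc (plateauStart μ (collapse μ x)) (plateauEnd μ (collapse μ x)) :=
    (exists_mem_Icc_plateau μ x).choose_spec
  refine ⟨fun h ↦ h ▸ hx, fun hy ↦ ?_⟩
  rcases lt_trichotomy (collapse μ x) y with h | h | h
  · linarith [plateauEnd_add_le μ h, hx.2, hy.1]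
  · exact h
  · linarith [plateauEnd_add_le μ h, hx.1, hy.2]

lemma collapse_plateauStart (y : ℝ) : collapse μ (plateauStart μ y) = y :=
  (collapse_eq_iff μ).2 ⟨le_rfl, plateauStart_le_plateauEnd μ y⟩

lemma plateauStart_collapse_le (x : ℝ) : plateauStart μ (collapse μ x) ≤ x :=
  ((collapse_eq_iff μ).1 rfl).1

lemma le_plateauEnd_collapse (x : ℝ) : x ≤ plateauEnd μ (collapse μ x) :=
  ((collapse_eq_iff μ).1 rfl).2

lemma le_collapse_iff {x y : ℝ} : y ≤ collapse μ x ↔ plateauStart μ y ≤ x := by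
  refine ⟨fun h ↦ ((strictMono_plateauStart μ).monotone h).trans (plateauStart_collapse_le μ x),
    fun h ↦ ?_⟩
  by_contra! hlt
  linarith [plateauEnd_add_le μ hlt, le_plateauEnd_collapse μ x]

lemma collapse_le_iff {x y : ℝ} : collapse μ x ≤ y ↔ x ≤ plateauEnd μ y := by
  refine ⟨fun h ↦ ?_, fun h ↦ ?_⟩
  · rcases h.eq_or_lt with rfl | hlt
    · exact le_plateauEnd_collapse μ x
    · linarith [plateauEnd_add_le μ hlt, le_plateauEnd_collapse μ x, plateauStart_le_plateauEnd μ y]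
  · by_contra! hlt
    linarith [plateauEnd_add_le μ hlt, plateauStart_collapse_le μ x]

lemma lipschitzWith_collapse : LipschitzWith 1 (collapse μ) := by
  refine LipschitzWith.of_le_add fun x x' ↦ ?_
  rcases le_or_gt (collapse μ x) (collapse μ x') with h | h
  · linarith [dist_nonneg (x := x) (y := x')]
  · linarith [plateauEnd_add_le μ h, plateauStart_collapse_le μ x, le_plateauEnd_collapse μ x',
      le_abs_self (x - x'), Real.dist_eq x x']

end Collapse


section Wave

/-- The clamp of `t` to the unit interval. -/
def ramp (t : ℝ) : ℝ := max 0 (min 1 t)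

lemma ramp_of_nonpos {t : ℝ} (ht : t ≤ 0) : ramp t = 0 := by
  rw [ramp, min_eq_right (by linarith), max_eq_left ht]

lemma ramp_of_one_le {t : ℝ} (ht : 1 ≤ t) : ramp t = 1 := by
  rw [ramp, min_eq_left ht, max_eq_right zero_le_one]

lemma ramp_of_mem_Icc {t : ℝ} (ht : t ∈ Icc (0 : ℝ) 1) : ramp t = t := by
  rw [ramp, min_eq_right ht.2, max_eq_right ht.1]

/-- The piecewise linear path that goes from `c` up to `b`, down to `a` and back up to `c`, each
leg taking unit time. -/
def wave (a c b u : ℝ) : ℝ :=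
  c + (b - c) * ramp u - (b - a) * ramp (u - 1) + (c - a) * ramp (u - 2)

variable {a b c u : ℝ}

lemma continuous_wave : Continuous (wave a c b) := by
  unfold wave ramp
  fun_prop

lemma wave_self : wave c c c u = c := by simp [wave]

lemma wave_of_nonpos (hu : u ≤ 0) : wave a c b u = c := by
  rw [wave, ramp_of_nonpos hu, ramp_of_nonpos (by linarith), ramp_of_nonpos (by linarith)]
  ring

lemma wave_of_three_le (hu : 3 ≤ u) : wave a c b u = c := by
  rw [wave, ramp_of_one_le (by linarith), ramp_of_one_le (by linarith),
    ramp_of_one_le (by linarith)]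
  ring

lemma wave_first_leg (hu : u ∈ Icc (0 : ℝ) 1) : wave a c b u = c + (b - c) * u := by
  rw [wave, ramp_of_mem_Icc hu, ramp_of_nonpos (by linarith [hu.2]),
    ramp_of_nonpos (by linarith [hu.2])]
  ring

lemma wave_second_leg (hu : u ∈ Icc (1 : ℝ) 2) : wave a c b u = b - (b - a) * (u - 1) := by
  rw [wave, ramp_of_one_le hu.1, ramp_of_mem_Icc ⟨by linarith [hu.1], by linarith [hu.2]⟩,
    ramp_of_nonpos (by linarith [hu.2])]
  ring

lemma wave_third_leg (hu : u ∈ Icc (2 : ℝ) 3) : wave a c b u = a + (c - a) * (u - 2) := by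
  rw [wave, ramp_of_one_le (by linarith [hu.1]), ramp_of_one_le (by linarith [hu.1]),
    ramp_of_mem_Icc ⟨by linarith [hu.1], by linarith [hu.2]⟩]
  ring

lemma wave_mem_Icc (hac : a ≤ c) (hcb : c ≤ b) : wave a c b u ∈ Icc a b := by
  rcases le_or_gt u 0 with h0 | h0
  · exact wave_of_nonpos h0 ▸ ⟨hac, hcb⟩
  rcases le_or_gt u 1 with h1 | h1
  · rw [wave_first_leg ⟨h0.le, h1⟩]
    constructor <;> nlinarith
  rcases le_or_gt u 2 with h2 | h2
  · rw [wave_second_leg ⟨h1.le, h2⟩]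
    constructor <;> nlinarith
  rcases le_or_gt u 3 with h3 | h3
  · rw [wave_third_leg ⟨h2.le, h3⟩]
    constructor <;> nlinarith
  · exact wave_of_three_le h3.le ▸ ⟨hac, hcb⟩

lemma bijOn_mul_add_Ioc {k : ℝ} (hk : 0 < k) (m p q : ℝ) :
    BijOn (fun u ↦ k * u + m) (Ioc p q) (Ioc (k * p + m) (k * q + m)) := by
  rw [← image_affine_Ioc hk]
  exact InjOn.bijOn_image fun u _ v _ huv ↦ mul_left_cancel₀ hk.ne' (add_right_cancel huv)

lemma bijOn_sub_mul_Ioc {k : ℝ} (hk : 0 < k) (m p q : ℝ) :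
    BijOn (fun u ↦ m - k * u) (Ioc p q) (Ico (m - k * q) (m - k * p)) := by
  rw [← image_const_sub_Ioc, ← image_mul_left_Ioc hk, image_image]
  exact InjOn.bijOn_image fun u _ v _ huv ↦ mul_left_cancel₀ hk.ne' (sub_right_injective huv)

lemma bijOn_wave_first_leg (hcb : c < b) : BijOn (wave a c b) (Ioc 0 1) (Ioc c b) := by
  convert (bijOn_mul_add_Ioc (sub_pos.2 hcb) c 0 1).congr fun u hu ↦ ?_ using 2
  · ring
  · ring
  · rw [wave_first_leg (Ioc_subset_Icc_self hu)]
    ring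

lemma bijOn_wave_second_leg (hab : a < b) : BijOn (wave a c b) (Ioc 1 2) (Ico a b) := by
  convert (bijOn_sub_mul_Ioc (sub_pos.2 hab) (b + (b - a)) 1 2).congr fun u hu ↦ ?_ using 2
  · ring
  · ring
  · rw [wave_second_leg (Ioc_subset_Icc_self hu)]
    ring

lemma bijOn_wave_third_leg (hac : a < c) : BijOn (wave a c b) (Ioc 2 3) (Ioc a c) := by
  convert (bijOn_mul_add_Ioc (sub_pos.2 hac) (a - 2 * (c - a)) 2 3).congr fun u hu ↦ ?_ using 2
  · ring
  · ring
  · rw [wave_third_leg (Ioc_subset_Icc_self hu)]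
    ring

lemma bijOn_wave_rising_legs (hac : a < c) (hcb : c < b) :
    BijOn (wave a c b) (Ioc 0 1 ∪ Ioc 2 3) (Ioc a b) := by
  rw [← Ioc_union_Ioc_eq_Ioc hac.le hcb.le, union_comm (Ioc a c)]
  have hfirst : BijOn (wave a c b) (Ioc 0 1) (Ioc c b) := bijOn_wave_first_leg hcb
  have hthird : BijOn (wave a c b) (Ioc 2 3) (Ioc a c) := bijOn_wave_third_leg hac
  refine hfirst.union hthird ((injOn_union ?_).2 ⟨hfirst.injOn, hthird.injOn, fun u hu v hv ↦ ?_⟩)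
  · exact disjoint_left.2 fun u hu hu' ↦ by linarith [hu.2, hu'.1]
  · exact ((hthird.mapsTo hv).2.trans_lt (hfirst.mapsTo hu).1).ne'

end Wave

section Fold

variable (μ : Measure ℝ)

/-- The time, on the clock of `wave`, at which a point at position `x` traverses the plateau of `c`.
If `c` is not an atom, then division by zero makes this `0`. -/
def phase (c x : ℝ) : ℝ := 3 * (x - plateauStart μ c) / μ.real {c}

lemma phase_plateauStart (c : ℝ) : phase μ c (plateauStart μ c) = 0 := by simp [phase]

lemma continuous_phase (c : ℝ) : Continuous (phase μ c) := by
  unfold phase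
  fun_prop

variable {a b : ℝ → ℝ} {c x y : ℝ}

lemma phase_eq_iff {u : ℝ} (hc : 0 < μ.real {c}) :
    phase μ c x = u ↔ x = plateauStart μ c + u / 3 * μ.real {c} := by
  rw [phase, div_eq_iff hc.ne']
  constructor <;> intro h <;> linarith

variable [IsFiniteMeasure μ]

lemma phase_plateauEnd (hc : 0 < μ.real {c}) : phase μ c (plateauEnd μ c) = 3 := by
  rw [phase_eq_iff μ hc, plateauEnd_eq]
  ring

lemma collapse_eq_iff_phase_mem_Icc (hc : 0 < μ.real {c}) :
    collapse μ x = c ↔ phase μ c x ∈ Icc 0 3 := by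
  rw [collapse_eq_iff, phase, plateauEnd_eq, mem_Icc, mem_Icc, le_div_iff₀ hc, div_le_iff₀ hc]
  constructor <;> rintro ⟨h₁, h₂⟩ <;> constructor <;> linarith

lemma phase_collapse_mem_Icc (x : ℝ) : phase μ (collapse μ x) x ∈ Icc 0 3 := by
  rcases measureReal_nonneg.eq_or_lt (b := μ.real {collapse μ x}) with hc | hc
  · simp [phase, ← hc]
  · exact (collapse_eq_iff_phase_mem_Icc μ hc).1 rfl

lemma eq_of_collapse_eq_of_phase_eq {x' : ℝ} (hx : collapse μ x = c) (hx' : collapse μ x' = c)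
    (h : phase μ c x = phase μ c x') : x = x' := by
  rcases measureReal_nonneg.eq_or_lt (b := μ.real {c}) with hc | hc
  · rw [collapse_eq_iff, plateauEnd_eq, ← hc, add_zero, Icc_self, mem_singleton_iff] at hx hx'
    rw [hx, hx']
  · rw [phase_eq_iff μ hc] at h
    rw [h, ← (phase_eq_iff μ hc).1 rfl]

/-- `collapse μ` with the plateau of `c` replaced by a `wave` that climbs to `b c` and dives to
`a c`. -/
def fold (a b : ℝ → ℝ) (x : ℝ) : ℝ :=
  wave (a (collapse μ x)) (collapse μ x) (b (collapse μ x)) (phase μ (collapse μ x) x)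

variable {μ}

lemma fold_of_collapse_eq (h : collapse μ x = c) :
    fold μ a b x = wave (a c) c (b c) (phase μ c x) := by
  rw [fold, h]

lemma fold_plateauStart (y : ℝ) : fold μ a b (plateauStart μ y) = y := by
  rw [fold_of_collapse_eq (collapse_plateauStart μ y), phase_plateauStart, wave_of_nonpos le_rfl]

lemma fold_plateauEnd (y : ℝ) : fold μ a b (plateauEnd μ y) = y := by
  rw [fold_of_collapse_eq ((collapse_eq_iff μ).2 ⟨plateauStart_le_plateauEnd μ y, le_rfl⟩)]
  rcases measureReal_nonneg.eq_or_lt (b := μ.real {y}) with hy | hy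
  · rw [phase, ← hy, div_zero, wave_of_nonpos le_rfl]
  · rw [phase_plateauEnd μ hy, wave_of_three_le le_rfl]

lemma wave_phase_of_collapse_ne (h : collapse μ x ≠ c) :
    wave (a c) c (b c) (phase μ c x) = c := by
  rcases measureReal_nonneg.eq_or_lt (b := μ.real {c}) with hc | hc
  · rw [phase, ← hc, div_zero, wave_of_nonpos le_rfl]
  rw [Ne, collapse_eq_iff_phase_mem_Icc μ hc, mem_Icc, not_and_or, not_le, not_le] at h
  rcases h with h | h
  · exact wave_of_nonpos h.le
  · exact wave_of_three_le h.le

lemma continuous_fold (hac : ∀ c, a c ≤ c) (hcb : ∀ c, c ≤ b c)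
    (hfin : ∀ ε > 0, {c | ε ≤ b c - a c}.Finite) : Continuous (fold μ a b) := by
  refine continuous_of_uniform_approx_of_continuous fun V hV ↦ ?_
  obtain ⟨ε, hε, hεV⟩ := Metric.mem_uniformity_dist.1 hV
  let bump (c x : ℝ) : ℝ := wave (a c) c (b c) (phase μ c x) - c
  have hbump (s : Finset ℝ) (x : ℝ) :
      ∑ c ∈ s, bump c x = if collapse μ x ∈ s then bump (collapse μ x) x else 0 := by
    rw [← Finset.sum_ite_eq s _ (bump · x)]
    refine Finset.sum_congr rfl fun c _ ↦ ?_
    split_ifs with h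
    · rfl
    · exact sub_eq_zero.2 (wave_phase_of_collapse_ne h)
  refine ⟨fun x ↦ collapse μ x + ∑ c ∈ (hfin ε hε).toFinset, bump c x, ?_, fun x ↦ hεV ?_⟩
  · exact (lipschitzWith_collapse μ).continuous.add <| continuous_finsetSum _ fun c _ ↦
      (continuous_wave.comp (continuous_phase μ c)).sub continuous_const
  simp only [hbump, Finite.mem_toFinset, mem_ofPred_eq]
  split_ifs with hx
  · simpa [bump, fold] using hε
  · have hmem : fold μ a b x ∈ Icc (a (collapse μ x)) (b (collapse μ x)) :=
      wave_mem_Icc (hac _) (hcb _)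
    rw [Real.dist_eq, add_zero, abs_lt]
    constructor <;> linarith [hmem.1, hmem.2, hac (collapse μ x), hcb (collapse μ x)]

lemma fold_mem_Icc_iff {p q : ℝ} (hac : ∀ c, a c ≤ c) (hcb : ∀ c, c ≤ b c)
    (hpq : ∀ c, (a c = c ∧ b c = c) ∨ Icc (a c) (b c) ⊆ Icc p q) :
    fold μ a b x ∈ Icc p q ↔ x ∈ Icc (plateauStart μ p) (plateauEnd μ q) := by
  rw [mem_Icc (a := plateauStart μ p), ← le_collapse_iff, ← collapse_le_iff, ← mem_Icc]
  rcases hpq (collapse μ x) with ⟨ha, hb⟩ | hsub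
  · rw [fold, ha, hb, wave_self]
  · exact iff_of_true (hsub (wave_mem_Icc (hac _) (hcb _))) (hsub ⟨hac _, hcb _⟩)

/-- The interval `[a c, b c]` swept above the plateau of `c` has `c` in its interior if `c` is an
atom, and is reduced to `c` otherwise. -/
def IsSweep (μ : Measure ℝ) (a b : ℝ → ℝ) : Prop :=
  ∀ c, (0 < μ.real {c} ∧ a c < c ∧ c < b c) ∨ (μ.real {c} = 0 ∧ a c = c ∧ b c = c)

lemma IsSweep.bijOn_collapse (hab : IsSweep μ a b) {I : Set ℝ} (hI : I ⊆ Ioc 0 3)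
    {J : ℝ → ℝ → Set ℝ} (hJ : ∀ c, J c c = ∅)
    (hwave : ∀ {a c b}, a < c → c < b → BijOn (wave a c b) I (J a b)) (y : ℝ) :
    BijOn (collapse μ) {x | phase μ (collapse μ x) x ∈ I ∧ fold μ a b x = y}
      {c | y ∈ J (a c) (b c)} := by
  refine ⟨fun x ⟨hxI, hxy⟩ ↦ ?_, fun x ⟨hxI, hxy⟩ x' ⟨hxI', hxy'⟩ hxx' ↦ ?_, fun c hc ↦ ?_⟩
  · rcases hab (collapse μ x) with ⟨-, hac, hcb⟩ | ⟨hc, -, -⟩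
    · exact hxy ▸ (hwave hac hcb).mapsTo hxI
    · simpa [phase, hc] using (hI hxI).1
  · rcases hab (collapse μ x') with ⟨-, hac, hcb⟩ | ⟨hc, -, -⟩
    · rw [hxx'] at hxI
      rw [fold_of_collapse_eq hxx'] at hxy
      rw [fold] at hxy'
      exact eq_of_collapse_eq_of_phase_eq μ hxx' rfl
        ((hwave hac hcb).injOn hxI hxI' (hxy.trans hxy'.symm))
    · simpa [phase, hc] using (hI hxI').1
  · rcases hab c with ⟨hc₀, hac, hcb⟩ | ⟨-, ha, hb⟩
    · obtain ⟨u, hu, huy⟩ := (hwave hac hcb).surjOn hc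
      obtain ⟨x, hx⟩ : ∃ x, phase μ c x = u := ⟨_, (phase_eq_iff μ hc₀).2 rfl⟩
      have hxc : collapse μ x = c :=
        (collapse_eq_iff_phase_mem_Icc μ hc₀).2 (hx ▸ Ioc_subset_Icc_self (hI hu))
      refine ⟨x, ⟨?_, ?_⟩, hxc⟩
      · rwa [hxc, hx]
      · rw [fold_of_collapse_eq hxc, hx, huy]
    · simp [ha, hb, hJ] at hc

lemma IsSweep.bijOn_collapse_rising (hab : IsSweep μ a b) (y : ℝ) :
    BijOn (collapse μ) {x | phase μ (collapse μ x) x ∈ Ioc 0 1 ∪ Ioc 2 3 ∧ fold μ a b x = y}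
      {c | y ∈ Ioc (a c) (b c)} :=
  hab.bijOn_collapse (union_subset (Ioc_subset_Ioc_right (by norm_num))
    (Ioc_subset_Ioc_left (by norm_num))) (J := Ioc) Ioc_self bijOn_wave_rising_legs y

lemma IsSweep.bijOn_collapse_falling (hab : IsSweep μ a b) (y : ℝ) :
    BijOn (collapse μ) {x | phase μ (collapse μ x) x ∈ Ioc 1 2 ∧ fold μ a b x = y}
      {c | y ∈ Ico (a c) (b c)} :=
  hab.bijOn_collapse (Ioc_subset_Ioc (by norm_num) (by norm_num)) (J := Ico) Ico_self
    (fun hac hcb ↦ bijOn_wave_second_leg (hac.trans hcb)) y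

lemma setOf_fold_eq (y : ℝ) : {x | fold μ a b x = y} = {plateauStart μ y} ∪
      ({x | phase μ (collapse μ x) x ∈ Ioc 0 1 ∪ Ioc 2 3 ∧ fold μ a b x = y} ∪
        {x | phase μ (collapse μ x) x ∈ Ioc 1 2 ∧ fold μ a b x = y}) := by
  ext x
  simp only [mem_union, mem_singleton_iff, mem_ofPred_eq, ← or_and_right]
  refine ⟨fun hxy ↦ ?_, ?_⟩
  · have hphase := phase_collapse_mem_Icc μ x
    rcases hphase.1.eq_or_lt with h | h
    · rw [fold, ← h, wave_of_nonpos le_rfl] at hxy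
      subst hxy
      exact .inl (eq_of_collapse_eq_of_phase_eq μ rfl (collapse_plateauStart μ _)
        (by rw [← h, phase_plateauStart]))
    · refine .inr ⟨?_, hxy⟩
      simp only [mem_Ioc]
      grind
  · rintro (rfl | ⟨-, hxy⟩)
    · exact fold_plateauStart y
    · exact hxy

lemma IsSweep.encard_setOf_fold_eq (hab : IsSweep μ a b) (y : ℝ) :
    {x | fold μ a b x = y}.encard =
      1 + {c | y ∈ Ioc (a c) (b c)}.encard + {c | y ∈ Ico (a c) (b c)}.encard := by
  rw [setOf_fold_eq, encard_union_eq, encard_union_eq, encard_singleton, add_assoc,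
    encard_congr ((hab.bijOn_collapse_rising y).equiv _),
    encard_congr ((hab.bijOn_collapse_falling y).equiv _)]
  · refine disjoint_left.2 fun x ⟨hx, _⟩ ⟨hx', _⟩ ↦ ?_
    rcases hx with hx | hx
    · exact hx'.1.not_ge hx.2
    · exact hx.1.not_ge hx'.2
  · simp [collapse_plateauStart, phase_plateauStart]

lemma IsSweep.countable_setOf_fold_eq (hab : IsSweep μ a b) (hcount : {c | a c < b c}.Countable)
    (y : ℝ) : {x | fold μ a b x = y}.Countable := by
  rw [setOf_fold_eq]
  refine (countable_singleton _).union (.union ?_ ?_)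
  · exact (hab.bijOn_collapse_rising y).mapsTo.countable_of_injOn
      (hab.bijOn_collapse_rising y).injOn (hcount.mono fun c hc ↦ hc.1.trans_le hc.2)
  · exact (hab.bijOn_collapse_falling y).mapsTo.countable_of_injOn
      (hab.bijOn_collapse_falling y).injOn (hcount.mono fun c hc ↦ hc.1.trans_lt hc.2)

end Fold

section Realization

/-- `F` is a continuous self-map of `[0, 1]` fixing the endpoints whose section over `y` has `f y`
elements. -/
def Realizes (F : ℝ → ℝ) (f : ℝ → ℕ∞) : Prop :=
  ContinuousOn F (Icc 0 1) ∧ MapsTo F (Icc 0 1) (Icc 0 1) ∧ F 0 = 0 ∧ F 1 = 1 ∧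
    ∀ y ∈ Icc (0 : ℝ) 1, (Sec F y).Countable ∧ (Sec F y).encard = f y

lemma countable_setOf_pos_of_finite {ι : Type*} {w : ι → ℝ}
    (hw : ∀ ε > 0, {i | ε ≤ w i}.Finite) : {i | 0 < w i}.Countable := by
  refine (countable_iUnion fun n : ℕ ↦ (hw (1 / (n + 1)) Nat.one_div_pos_of_nat).countable).mono
    fun i hi ↦ ?_
  obtain ⟨n, hn⟩ := exists_nat_one_div_lt (mem_ofPred.1 hi)
  exact mem_iUnion.2 ⟨n, hn.le⟩

lemma exists_isSweep {a b : ℝ → ℝ} (hcount : {c | a c < b c}.Countable)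
    (hab : ∀ c, (a c < c ∧ c < b c) ∨ (a c = c ∧ b c = c)) :
    ∃ μ : Measure ℝ, IsFiniteMeasure μ ∧ IsSweep μ a b := by
  obtain ⟨μ, hμ, hnull⟩ := exists_isFiniteMeasure_null_iff_disjoint hcount
  refine ⟨μ, hμ, fun c ↦ ?_⟩
  have hnull_c : μ.real {c} = 0 ↔ ¬ a c < b c := by
    simp [measureReal_eq_zero_iff, hnull]
  rcases hab c with ⟨hac, hcb⟩ | ⟨ha, hb⟩
  · refine .inl ⟨measureReal_nonneg.lt_of_ne' fun h ↦ ?_, hac, hcb⟩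
    exact hnull_c.1 h (hac.trans hcb)
  · exact .inr ⟨hnull_c.2 (by simp [ha, hb]), ha, hb⟩

lemma exists_orderIso_zero_one {p q : ℝ} (hpq : p < q) : ∃ e : ℝ ≃o ℝ, e 0 = p ∧ e 1 = q :=
  ⟨(OrderIso.mulLeft₀ (q - p) (sub_pos.2 hpq)).trans (OrderIso.addRight p), by simp, by simp⟩

lemma exists_realizes_of_sweep {a b : ℝ → ℝ}
    (hab : ∀ c, (a c < c ∧ c < b c ∧ Icc (a c) (b c) ⊆ Icc 0 1) ∨ (a c = c ∧ b c = c))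
    (hfin : ∀ ε > 0, {c | ε ≤ b c - a c}.Finite) :
    ∃ F, Realizes F fun y ↦
      1 + {c | y ∈ Ioc (a c) (b c)}.encard + {c | y ∈ Ico (a c) (b c)}.encard := by
  have hac (c : ℝ) : a c ≤ c := by grind
  have hcb (c : ℝ) : c ≤ b c := by grind
  have hcount : {c | a c < b c}.Countable := by
    simpa only [sub_pos] using countable_setOf_pos_of_finite hfin
  obtain ⟨μ, hμ, hsweep⟩ := exists_isSweep hcount fun c ↦ by grind
  obtain ⟨e, he₀, he₁⟩ := exists_orderIso_zero_one
    ((strictMono_plateauStart μ zero_lt_one).trans_le (plateauStart_le_plateauEnd μ 1))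
  have hmem (t : ℝ) : fold μ a b (e t) ∈ Icc 0 1 ↔ t ∈ Icc 0 1 := by
    rw [fold_mem_Icc_iff hac hcb fun c ↦ by grind, ← he₀, ← he₁]
    simp only [mem_Icc, e.le_iff_le]
  have hsec {y : ℝ} (hy : y ∈ Icc 0 1) :
      Sec (fun t ↦ fold μ a b (e t)) y = e ⁻¹' {x | fold μ a b x = y} := by
    ext t
    exact ⟨And.right, fun hty ↦ ⟨(hmem t).1 (hty.symm ▸ hy), hty⟩⟩
  refine ⟨fun t ↦ fold μ a b (e t), ((continuous_fold hac hcb hfin).comp e.continuous).continuousOn,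
    fun t ht ↦ (hmem t).2 ht, ?_, ?_, fun y hy ↦ ?_⟩
  · simp only [he₀, fold_plateauStart]
  · simp only [he₁, fold_plateauEnd]
  · rw [hsec hy, encard_preimage_of_bijective e.bijective]
    exact ⟨(hsweep.countable_setOf_fold_eq hcount y).preimage e.injective,
      hsweep.encard_setOf_fold_eq y⟩

lemma exists_injective_mem_of_infinite {ι α : Type*} [Countable ι] {s : ι → Set α}
    (hs : ∀ i, (s i).Infinite) : ∃ c : ι → α, Function.Injective c ∧ ∀ i, c i ∈ s i := by
  classical
  obtain ⟨e, he⟩ := exists_injective_nat ι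
  choose t hts htcard using fun i ↦ (hs i).exists_subset_card_eq (e i + 1)
  have hall (I : Finset ι) : I.card ≤ (I.biUnion t).card := by
    obtain rfl | hI := I.eq_empty_or_nonempty
    · simp
    obtain ⟨i, hi, hmax⟩ := I.exists_max_image e hI
    calc I.card = (I.image e).card := (Finset.card_image_of_injective I he).symm
      _ ≤ (Finset.range (e i + 1)).card := Finset.card_le_card fun n hn ↦ by
        obtain ⟨j, hj, rfl⟩ := Finset.mem_image.1 hn
        exact Finset.mem_range_succ_iff.2 (hmax j hj)
      _ = (t i).card := by rw [Finset.card_range, htcard]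
      _ ≤ (I.biUnion t).card := Finset.card_le_card (Finset.subset_biUnion_of_mem t hi)
  obtain ⟨c, hc, hct⟩ := (Finset.all_card_le_biUnion_card_iff_exists_injective t).1 hall
  exact ⟨c, hc, fun i ↦ hts i (hct i)⟩

lemma encard_setOf_mem_extend {ι α β : Type*} {c : ι → α} (hc : c.Injective) {a b : ι → α}
    {J : α → α → Set β} (hJ : ∀ d, J d d = ∅) (y : β) :
    {d | y ∈ J (c.extend a id d) (c.extend b id d)}.encard = {i | y ∈ J (a i) (b i)}.encard := by
  rw [← hc.encard_image]
  congr 1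
  ext d
  by_cases hd : ∃ i, c i = d
  · obtain ⟨i, rfl⟩ := hd
    simp [hc.extend_apply, hc.eq_iff]
  · simp only [Function.extend_apply' _ _ _ hd, mem_ofPred_eq, mem_image, hJ, id]
    exact iff_of_false (notMem_empty y) fun ⟨i, _, hi⟩ ↦ hd ⟨i, hi⟩

theorem exists_realizes_of_intervals {ι : Type*} {a b : ι → ℝ} (hab : ∀ i, a i < b i)
    (hsub : ∀ i, Icc (a i) (b i) ⊆ Icc 0 1) (hfin : ∀ ε > 0, {i | ε ≤ b i - a i}.Finite) :
    ∃ F, Realizes F fun y ↦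
      1 + {i | y ∈ Ioc (a i) (b i)}.encard + {i | y ∈ Ico (a i) (b i)}.encard := by
  have : Countable ι := by
    simpa [hab, countable_univ_iff] using countable_setOf_pos_of_finite hfin
  obtain ⟨c, hc, hcmem⟩ := exists_injective_mem_of_infinite fun i ↦ Ioo_infinite (hab i)
  have hcases (d : ℝ) : (∃ i, c i = d ∧ c.extend a id d = a i ∧ c.extend b id d = b i) ∨
      (c.extend a id d = d ∧ c.extend b id d = d) := by
    by_cases hd : ∃ i, c i = d
    · obtain ⟨i, rfl⟩ := hd
      exact .inl ⟨i, rfl, hc.extend_apply _ _ _, hc.extend_apply _ _ _⟩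
    · exact .inr ⟨Function.extend_apply' _ _ _ hd, Function.extend_apply' _ _ _ hd⟩
  simp only [← encard_setOf_mem_extend hc Ioc_self, ← encard_setOf_mem_extend hc Ico_self]
  refine exists_realizes_of_sweep (fun d ↦ ?_)
    fun ε hε ↦ ((hfin ε hε).image c).subset fun d hd ↦ ?_
  · refine (hcases d).imp_left ?_
    rintro ⟨i, rfl, ha, hb⟩
    rw [ha, hb]
    exact ⟨(hcmem i).1, (hcmem i).2, hsub i⟩
  · rw [mem_ofPred_eq] at hd
    rcases hcases d with ⟨i, rfl, ha, hb⟩ | ⟨ha, hb⟩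
    · exact mem_image_of_mem c (by rwa [ha, hb] at hd)
    · rw [ha, hb] at hd
      linarith

end Realization


section Layers

/-- Conditions (1) and (**) on the whole line, with neighbourhoods expressed by filters. The
conventions of `Cond1` and `CondStar` at `0` and `1` are those of an extension by `1`. -/
structure IsLinePreindicatrix (g : ℝ → ℕ∞) : Prop where
  one_le : ∀ y, 1 ≤ g y
  two_mul_le : ∀ y, g y ≠ ⊤ → ∀ᶠ p in 𝓝[<] y ×ˢ 𝓝[>] y,
    2 * g y ≤ g p.1 + g p.2 ∧ (g p.1 + g p.2 = 2 * g y → ∃ k : ℕ, g p.1 = k ∧ Odd k)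
  le_of_eq_top : ∀ y, g y = ⊤ → ∀ n : ℕ, ∀ᶠ p in 𝓝[<] y ×ˢ 𝓝[>] y, (n : ℕ∞) ≤ g p.1 + g p.2

/-- The layers of `g` that are full along `l`. A value of `g` is made of `1` and of layers of
height `2`, numbered from `0`; layer `k` is full at `z` if the value `g z` reaches its top
`2 * k + 3`. -/
def layers {α : Type*} (g : α → ℕ∞) (l : Filter α) : Set ℕ :=
  {k | ∀ᶠ z in l, 2 * (k : ℕ∞) + 3 ≤ g z}

section

variable {α : Type*} {g : α → ℕ∞} {l : Filter α}

lemma layers_anti {l' : Filter α} (h : l ≤ l') : layers g l' ⊆ layers g l :=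
  fun _ hk ↦ hk.filter_mono h

lemma isLowerSet_layers : IsLowerSet (layers g l) := fun _ _ hjk hk ↦
  hk.mono fun _ hz ↦ le_trans (by gcongr) hz

lemma notMem_of_isLowerSet_of_encard_eq {s : Set ℕ} (hs : IsLowerSet s) {n : ℕ}
    (hn : s.encard = n) : n ∉ s := by
  intro hmem
  have hle : (Iic n).encard ≤ s.encard := encard_le_encard fun _ hk ↦ hs hk hmem
  rw [hn, ← Finset.coe_Iic, encard_coe_eq_coe_finsetCard, Nat.card_Iic, Nat.cast_le] at hle
  lia

lemma exists_frequently_le_of_encard_layers_ne_top (h : (layers g l).encard ≠ ⊤) :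
    ∃ n : ℕ, (layers g l).encard = n ∧ ∃ᶠ z in l, ∃ m ≤ 2 * n + 2, g z = m := by
  obtain ⟨n, hn⟩ := ENat.ne_top_iff_exists.1 h
  refine ⟨n, hn.symm, ?_⟩
  have hfreq : ∃ᶠ z in l, ¬ 2 * (n : ℕ∞) + 3 ≤ g z :=
    not_eventually.1 (notMem_of_isLowerSet_of_encard_eq isLowerSet_layers hn.symm)
  refine hfreq.mono fun z hz ↦ ?_
  obtain ⟨m, hm⟩ := ENat.ne_top_iff_exists.1 (lt_of_not_ge hz).ne_top
  rw [← hm, not_le] at hz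
  refine ⟨m, ?_, hm.symm⟩
  norm_cast at hz
  lia

lemma eventually_mem_layers_nhds [TopologicalSpace α] {s : Set α} (hs : IsOpen s) {y : α} {k : ℕ}
    (hk : k ∈ layers g (𝓝[s] y)) : ∀ᶠ z in 𝓝[s] y, k ∈ layers g (𝓝 z) := by
  filter_upwards [eventually_eventually_nhdsWithin.2 hk, self_mem_nhdsWithin] with z hnear hzs
  rwa [hs.nhdsWithin_eq hzs] at hnear

end

variable {g : ℝ → ℕ∞}

lemma IsLinePreindicatrix.le_one_add_encard_layers (hg : IsLinePreindicatrix g) (y : ℝ) :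
    g y ≤ 1 + (layers g (𝓝[<] y)).encard + (layers g (𝓝[>] y)).encard := by
  by_cases hL : (layers g (𝓝[<] y)).encard = ⊤
  · simp [hL]
  by_cases hR : (layers g (𝓝[>] y)).encard = ⊤
  · simp [hR]
  obtain ⟨l, hl, hlfreq⟩ := exists_frequently_le_of_encard_layers_ne_top hL
  obtain ⟨r, hr, hrfreq⟩ := exists_frequently_le_of_encard_layers_ne_top hR
  have hfreq : ∃ᶠ p in 𝓝[<] y ×ˢ 𝓝[>] y,
      (∃ m ≤ 2 * l + 2, g p.1 = m) ∧ ∃ n ≤ 2 * r + 2, g p.2 = n :=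
    frequently_prod_and.2 ⟨hlfreq, hrfreq⟩
  rw [hl, hr]
  rcases eq_or_ne (g y) ⊤ with hy | hy
  · obtain ⟨p, ⟨⟨m, hm, hpm⟩, n, hn, hpn⟩, hp⟩ :=
      (hfreq.and_eventually (hg.le_of_eq_top y hy (2 * l + 2 * r + 5))).exists
    rw [hpm, hpn] at hp
    norm_cast at hp
    lia
  · obtain ⟨p, ⟨⟨m, hm, hpm⟩, n, hn, hpn⟩, hp, hodd⟩ :=
      (hfreq.and_eventually (hg.two_mul_le y hy)).exists
    obtain ⟨v, hv⟩ := ENat.ne_top_iff_exists.1 hy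
    rw [hpm, hpn, ← hv] at hp hodd
    norm_cast at hp hodd
    rw [← hv]
    norm_cast
    grind

lemma one_add_encard_setOf_le {n : ℕ∞} (hn : 1 ≤ n) :
    1 + ({k : ℕ | 2 * (k : ℕ∞) + 3 ≤ n}.encard + {k : ℕ | 2 * (k : ℕ∞) + 3 ≤ n}.encard) ≤ n := by
  obtain rfl | hn_top := eq_or_ne n ⊤
  · exact le_top
  lift n to ℕ using hn_top
  have hone : 1 ≤ n := by exact_mod_cast hn
  have hset : {k : ℕ | 2 * (k : ℕ∞) + 3 ≤ n} = Finset.range ((n - 1) / 2) := by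
    ext k
    rw [mem_ofPred_eq, Finset.mem_coe, Finset.mem_range]
    norm_cast
    lia
  rw [hset, encard_coe_eq_coe_finsetCard, Finset.card_range]
  norm_cast
  lia

lemma IsLinePreindicatrix.one_add_encard_layers_le (hg : IsLinePreindicatrix g) (y : ℝ) :
    1 + ((layers g (𝓝 y)).encard + (layers g (𝓝 y)).encard) ≤ g y := by
  have hsub : layers g (𝓝 y) ⊆ {k : ℕ | 2 * (k : ℕ∞) + 3 ≤ g y} := fun _ hk ↦ hk.self_of_nhds
  exact le_trans (by gcongr) (one_add_encard_setOf_le (hg.one_le y))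

lemma encard_eq_encard_preimage_inl_add {α β : Type*} (s : Set (α ⊕ β)) :
    s.encard = (Sum.inl ⁻¹' s).encard + (Sum.inr ⁻¹' s).encard := by
  conv_lhs => rw [← image_preimage_inl_union_image_preimage_inr s]
  rw [encard_union_eq (isCompl_range_inl_range_inr.disjoint.mono (image_subset_range _ _)
    (image_subset_range _ _)), Sum.inl_injective.encard_image, Sum.inr_injective.encard_image]

lemma exists_encard_add_encard_eq {α β : Type*} {K L : Set α} {M R : Set β} (hKL : K ⊆ L)
    (hMR : M ⊆ R) {m : ℕ∞} (hm : K.encard + M.encard ≤ m) (hm' : m ≤ L.encard + R.encard) :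
    ∃ A B, K ⊆ A ∧ A ⊆ L ∧ M ⊆ B ∧ B ⊆ R ∧ A.encard + B.encard = m := by
  obtain ⟨s, hs, hs', hsm⟩ := exists_superset_subset_encard_eq
    (s := {x : α ⊕ β | x.elim (· ∈ K) (· ∈ M)}) (t := {x : α ⊕ β | x.elim (· ∈ L) (· ∈ R)})
    (k := m)
    (by rintro (x | x) hx; exacts [hKL hx, hMR hx])
    (by rwa [encard_eq_encard_preimage_inl_add]) (by rwa [encard_eq_encard_preimage_inl_add])
  exact ⟨Sum.inl ⁻¹' s, Sum.inr ⁻¹' s, fun _ hx ↦ hs hx, fun _ hx ↦ hs' hx, fun _ hx ↦ hs hx,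
    fun _ hx ↦ hs' hx, (encard_eq_encard_preimage_inl_add s).symm.trans hsm⟩

lemma IsLinePreindicatrix.exists_layers_at (hg : IsLinePreindicatrix g) (y : ℝ) :
    ∃ A B : Set ℕ, layers g (𝓝 y) ⊆ A ∧ A ⊆ layers g (𝓝[<] y) ∧
      layers g (𝓝 y) ⊆ B ∧ B ⊆ layers g (𝓝[>] y) ∧ 1 + (A.encard + B.encard) = g y := by
  obtain ⟨m, hm⟩ := exists_add_of_le (hg.one_le y)
  have hlow : (layers g (𝓝 y)).encard + (layers g (𝓝 y)).encard ≤ m :=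
    (ENat.add_le_add_iff_left ENat.one_ne_top).1 (hm ▸ hg.one_add_encard_layers_le y)
  have hhigh : m ≤ (layers g (𝓝[<] y)).encard + (layers g (𝓝[>] y)).encard := by
    have hle := hg.le_one_add_encard_layers y
    rwa [hm, add_assoc, ENat.add_le_add_iff_left ENat.one_ne_top] at hle
  obtain ⟨A, B, hA, hA', hB, hB', hAB⟩ := exists_encard_add_encard_eq
    (layers_anti nhdsWithin_le_nhds) (layers_anti nhdsWithin_le_nhds) hlow hhigh
  exact ⟨A, B, hA, hA', hB, hB', by rw [hAB, hm]⟩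

theorem IsLinePreindicatrix.exists_layers (hg : IsLinePreindicatrix g) : ∃ A B : ℝ → Set ℕ,
    (∀ y, 1 + (A y).encard + (B y).encard = g y) ∧
    (∀ y, ∀ k ∈ A y, ∀ᶠ z in 𝓝[<] y, k ∈ A z ∧ k ∈ B z) ∧
    ∀ y, ∀ k ∈ B y, ∀ᶠ z in 𝓝[>] y, k ∈ A z ∧ k ∈ B z := by
  choose A B hA hA' hB hB' hAB using hg.exists_layers_at
  refine ⟨A, B, fun y ↦ (add_assoc _ _ _).trans (hAB y), fun y k hk ↦ ?_, fun y k hk ↦ ?_⟩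
  · exact (eventually_mem_layers_nhds isOpen_Iio (hA' y hk)).mono fun z hz ↦ ⟨hA z hz, hB z hz⟩
  · exact (eventually_mem_layers_nhds isOpen_Ioi (hB' y hk)).mono fun z hz ↦ ⟨hA z hz, hB z hz⟩

end Layers

section Extension

variable {f : ℝ → ℕ∞} {r : ℕ∞ → ℕ∞ → Prop} {y : ℝ}

lemma eventually_mulIndicator_of_notMem (h : r 1 1) (hy : y ∉ Icc (0 : ℝ) 1) :
    ∀ᶠ p in 𝓝[<] y ×ˢ 𝓝[>] y,
      r ((Icc 0 1).mulIndicator f p.1) ((Icc 0 1).mulIndicator f p.2) := by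
  have hout : ∀ᶠ z in 𝓝 y, z ∉ Icc (0 : ℝ) 1 := isClosed_Icc.isOpen_compl.mem_nhds hy
  filter_upwards [(hout.filter_mono nhdsWithin_le_nhds).prod_mk
    (hout.filter_mono nhdsWithin_le_nhds)] with p hp
  rwa [mulIndicator_of_notMem hp.1, mulIndicator_of_notMem hp.2]

lemma eventually_mulIndicator_zero
    (h : ∃ ε > 0, ∀ y₂ ∈ Icc (0 : ℝ) 1, 0 < y₂ → y₂ < ε → r 1 (f y₂)) :
    ∀ᶠ p in 𝓝[<] (0 : ℝ) ×ˢ 𝓝[>] 0,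
      r ((Icc 0 1).mulIndicator f p.1) ((Icc 0 1).mulIndicator f p.2) := by
  obtain ⟨ε, hε, h⟩ := h
  filter_upwards [eventually_mem_nhdsWithin.prod_mk (Ioo_mem_nhdsGT (lt_min hε one_pos))]
    with p ⟨h₁, h₂, h₂'⟩
  obtain ⟨hε₂, hone⟩ := lt_min_iff.1 h₂'
  have hmem : p.2 ∈ Icc (0 : ℝ) 1 := ⟨h₂.le, hone.le⟩
  rw [mulIndicator_of_notMem fun hp ↦ hp.1.not_gt h₁, mulIndicator_of_mem hmem]
  exact h _ hmem h₂ hε₂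

lemma eventually_mulIndicator_one
    (h : ∃ ε > 0, ∀ y₁ ∈ Icc (0 : ℝ) 1, 1 - ε < y₁ → y₁ < 1 → r (f y₁) 1) :
    ∀ᶠ p in 𝓝[<] (1 : ℝ) ×ˢ 𝓝[>] 1,
      r ((Icc 0 1).mulIndicator f p.1) ((Icc 0 1).mulIndicator f p.2) := by
  obtain ⟨ε, hε, h⟩ := h
  filter_upwards [Filter.Eventually.prod_mk
    (Ioo_mem_nhdsLT (max_lt (sub_lt_self 1 hε) one_pos)) eventually_mem_nhdsWithin]
    with p ⟨⟨h₁, h₁'⟩, h₂⟩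
  obtain ⟨hε₁, hzero⟩ := max_lt_iff.1 h₁
  have hmem : p.1 ∈ Icc (0 : ℝ) 1 := ⟨hzero.le, h₁'.le⟩
  rw [mulIndicator_of_mem hmem, mulIndicator_of_notMem fun hp ↦ hp.2.not_gt h₂]
  exact h _ hmem hε₁ h₁'

lemma eventually_mulIndicator_of_mem_Ioo (hy : y ∈ Ioo (0 : ℝ) 1)
    (h : ∃ ε > 0, ∀ y₁ ∈ Icc (0 : ℝ) 1, ∀ y₂ ∈ Icc (0 : ℝ) 1,
      y - ε < y₁ → y₁ < y → y < y₂ → y₂ < y + ε → r (f y₁) (f y₂)) :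
    ∀ᶠ p in 𝓝[<] y ×ˢ 𝓝[>] y,
      r ((Icc 0 1).mulIndicator f p.1) ((Icc 0 1).mulIndicator f p.2) := by
  obtain ⟨ε, hε, h⟩ := h
  filter_upwards [Filter.Eventually.prod_mk
    (Ioo_mem_nhdsLT (max_lt (sub_lt_self y hε) hy.1))
    (Ioo_mem_nhdsGT (lt_min (lt_add_of_pos_right y hε) hy.2))] with p ⟨⟨h₁, h₁'⟩, h₂, h₂'⟩
  obtain ⟨hε₁, hzero⟩ := max_lt_iff.1 h₁
  obtain ⟨hε₂, hone⟩ := lt_min_iff.1 h₂'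
  have hmem₁ : p.1 ∈ Icc (0 : ℝ) 1 := ⟨hzero.le, (h₁'.trans hy.2).le⟩
  have hmem₂ : p.2 ∈ Icc (0 : ℝ) 1 := ⟨(hy.1.trans h₂).le, hone.le⟩
  rw [mulIndicator_of_mem hmem₁, mulIndicator_of_mem hmem₂]
  exact h _ hmem₁ _ hmem₂ hε₁ h₁' h₂ hε₂

lemma exists_odd_of_add_one_eq_two_mul {m n : ℕ∞} (hn : n ≠ ⊤) (h : m + 1 = 2 * n) :
    ∃ k : ℕ, m = k ∧ Odd k := by
  lift n to ℕ using hn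
  have htop : 2 * (n : ℕ∞) ≠ ⊤ := by exact_mod_cast ENat.natCast_ne_top (2 * n)
  lift m to ℕ using fun hm ↦ htop (by rw [← h, hm, top_add])
  norm_cast at h
  exact ⟨m, rfl, by grind⟩

lemma Preindicatrix.mulIndicator_two_mul_le (hf : Preindicatrix f)
    (hy : (Icc 0 1).mulIndicator f y ≠ ⊤) :
    ∀ᶠ p in 𝓝[<] y ×ˢ 𝓝[>] y,
      2 * (Icc 0 1).mulIndicator f y ≤
          (Icc 0 1).mulIndicator f p.1 + (Icc 0 1).mulIndicator f p.2 ∧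
        ((Icc 0 1).mulIndicator f p.1 + (Icc 0 1).mulIndicator f p.2 =
            2 * (Icc 0 1).mulIndicator f y →
          ∃ k : ℕ, (Icc 0 1).mulIndicator f p.1 = k ∧ Odd k) := by
  obtain ⟨hinterior, hzero, hone⟩ := hf.2.1
  let r (m n : ℕ∞) : Prop := 2 * (Icc 0 1).mulIndicator f y ≤ m + n ∧
    (m + n = 2 * (Icc 0 1).mulIndicator f y → ∃ k : ℕ, m = k ∧ Odd k)
  by_cases hmem : y ∈ Icc (0 : ℝ) 1
  · have hval := mulIndicator_of_mem hmem f
    rw [hval] at hy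
    rcases eq_endpoints_or_mem_Ioo_of_mem_Icc hmem with rfl | rfl | hIoo
    · obtain ⟨ε, hε, h⟩ := hzero hy
      exact eventually_mulIndicator_zero (r := r)
        ⟨ε, hε, fun z hz hz₀ hzε ↦ ⟨hval ▸ h z hz hz₀ hzε, fun _ ↦ ⟨1, rfl, odd_one⟩⟩⟩
    · obtain ⟨ε, hε, h⟩ := hone hy
      exact eventually_mulIndicator_one (r := r) ⟨ε, hε, fun z hz hzε hz₁ ↦
        ⟨hval ▸ h z hz hzε hz₁, fun heq ↦ exists_odd_of_add_one_eq_two_mul hy (hval ▸ heq)⟩⟩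
    · obtain ⟨ε, hε, h⟩ := hinterior y hIoo hy
      refine eventually_mulIndicator_of_mem_Ioo (r := r) hIoo ⟨ε, hε,
        fun z hz w hw h₁ h₂ h₃ h₄ ↦ ?_⟩
      obtain ⟨hle, hodd⟩ := h z hz w hw h₁ h₂ h₃ h₄
      exact ⟨hval ▸ hle, fun heq ↦ (hodd (hval ▸ heq)).1⟩
  · refine eventually_mulIndicator_of_notMem (r := r) ⟨?_, fun _ ↦ ⟨1, rfl, odd_one⟩⟩ hmem
    rw [mulIndicator_of_notMem hmem, mul_one, one_add_one_eq_two]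

lemma Preindicatrix.le_mulIndicator_add (hf : Preindicatrix f)
    (hy : (Icc 0 1).mulIndicator f y = ⊤) (n : ℕ) :
    ∀ᶠ p in 𝓝[<] y ×ˢ 𝓝[>] y,
      (n : ℕ∞) ≤ (Icc 0 1).mulIndicator f p.1 + (Icc 0 1).mulIndicator f p.2 := by
  have hmem : y ∈ Icc (0 : ℝ) 1 := by
    by_contra hmem
    simp [mulIndicator_of_notMem hmem] at hy
  rw [mulIndicator_of_mem hmem] at hy
  obtain ⟨ε, hε, hinterior, hzero, hone⟩ := hf.2.2 y hmem hy n
  rcases eq_endpoints_or_mem_Ioo_of_mem_Icc hmem with rfl | rfl | hIoo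
  · exact eventually_mulIndicator_zero (r := fun k l ↦ (n : ℕ∞) ≤ k + l) ⟨ε, hε, hzero rfl⟩
  · exact eventually_mulIndicator_one (r := fun k l ↦ (n : ℕ∞) ≤ k + l) ⟨ε, hε, hone rfl⟩
  · exact eventually_mulIndicator_of_mem_Ioo (r := fun k l ↦ (n : ℕ∞) ≤ k + l) hIoo
      ⟨ε, hε, hinterior⟩

theorem Preindicatrix.isLinePreindicatrix (hf : Preindicatrix f) :
    IsLinePreindicatrix ((Icc 0 1).mulIndicator f) where
  one_le _ := one_le_mulIndicator_apply (hf.1 _)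
  two_mul_le _ := hf.mulIndicator_two_mul_le
  le_of_eq_top _ := hf.le_mulIndicator_add

end Extension

section Intervals

lemma encard_setOf_sigma {ι : Type*} {τ : ι → Type*} {p : ∀ i, τ i → Prop}
    (huniq : ∀ i t t', p i t → p i t' → t = t') :
    {x : Sigma τ | p x.1 x.2}.encard = {i | ∃ t, p i t}.encard := by
  refine encard_congr (BijOn.equiv Sigma.fst ⟨fun x hx ↦ ⟨x.2, hx⟩, ?_, ?_⟩)
  · rintro ⟨i, t⟩ ht ⟨_, t'⟩ ht' rfl
    rw [huniq i t t' ht ht']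
  · rintro i ⟨t, ht⟩
    exact ⟨⟨i, t⟩, ht, rfl⟩

variable {P Q : ℕ → Set ℝ} {T : ℕ → Set (ℝ × ℝ)}

lemma finite_setOf_le_of_isTiling (hT : ∀ k, IsTiling (P k) (Q k) (1 / (k + 1)) (T k))
    (hP : ∀ k, volume (P k) ≠ ⊤) {ε : ℝ} (hε : 0 < ε) :
    {i : Σ k, T k | ε ≤ i.2.1.2 - i.2.1.1}.Finite := by
  obtain ⟨n, hn⟩ := exists_nat_one_div_lt hε
  refine ((finite_lt_nat n).biUnion fun k _ ↦
    ((hT k).finite_setOf_le (hP k) hε).image (Sigma.mk k)).subset ?_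
  rintro ⟨k, p⟩ hp
  have hkn : k < n := by
    have hlt : (1 : ℝ) / (n + 1) < 1 / (k + 1) :=
      hn.trans_le (le_trans hp ((hT k).isTile p p.2).1)
    rw [one_div_lt_one_div (by positivity) (by positivity)] at hlt
    exact_mod_cast lt_of_add_lt_add_right hlt
  exact mem_biUnion hkn (mem_image_of_mem _ hp)

theorem exists_intervals_of_layers {A B : ℝ → Set ℕ}
    (hA : ∀ y, ∀ k ∈ A y, ∀ᶠ z in 𝓝[<] y, k ∈ A z ∧ k ∈ B z)
    (hB : ∀ y, ∀ k ∈ B y, ∀ᶠ z in 𝓝[>] y, k ∈ A z ∧ k ∈ B z)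
    (hAB : ∀ y ∉ Icc (0 : ℝ) 1, A y = ∅ ∧ B y = ∅) :
    ∃ (ι : Type) (a b : ι → ℝ), (∀ i, a i < b i) ∧ (∀ i, Icc (a i) (b i) ⊆ Icc 0 1) ∧
      (∀ ε > 0, {i | ε ≤ b i - a i}.Finite) ∧
      ∀ y, {i | y ∈ Ioc (a i) (b i)}.encard = (A y).encard ∧
        {i | y ∈ Ico (a i) (b i)}.encard = (B y).encard := by
  have hAsub (k : ℕ) : {y | k ∈ A y} ⊆ Icc 0 1 := fun y hy ↦ by
    by_contra hmem
    simp [(hAB y hmem).1] at hy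
  have hBsub (k : ℕ) : {y | k ∈ B y} ⊆ Icc 0 1 := fun y hy ↦ by
    by_contra hmem
    simp [(hAB y hmem).2] at hy
  have htiling (k : ℕ) : ∃ T, IsTiling {y | k ∈ A y} {y | k ∈ B y} (1 / (k + 1)) T :=
    exists_isTiling (hA · k) (hB · k) (by positivity)
  choose T hT using htiling
  refine ⟨Σ k, T k, fun i ↦ i.2.1.1, fun i ↦ i.2.1.2, fun i ↦ (hT i.1).lt _ i.2.2, fun i ↦
    ((hT i.1).Icc_subset i.2).trans (union_subset (hAsub i.1) (hBsub i.1)), fun ε hε ↦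
    finite_setOf_le_of_isTiling hT (fun k ↦ measure_ne_top_of_subset (hAsub k) (by simp)) hε,
    fun y ↦ ⟨?_, ?_⟩⟩
  · rw [encard_setOf_sigma (p := fun k (t : T k) ↦ y ∈ Ioc t.1.1 t.1.2)
      fun k _ _ ↦ (hT k).eq_of_mem_Ioc]
    simp only [(hT _).exists_mem_Ioc_iff, mem_ofPred_eq, ofPred_mem_eq]
  · rw [encard_setOf_sigma (p := fun k (t : T k) ↦ y ∈ Ico t.1.1 t.1.2)
      fun k _ _ ↦ (hT k).eq_of_mem_Ico]
    simp only [(hT _).exists_mem_Ico_iff, mem_ofPred_eq, ofPred_mem_eq]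

end Intervals

theorem preindicatrix_realization (f : ℝ → ℕ∞) (hf : Preindicatrix f) :
    ∃ F : ℝ → ℝ, ContinuousOn F (Set.Icc 0 1) ∧
      Set.MapsTo F (Set.Icc 0 1) (Set.Icc 0 1) ∧ F 0 = 0 ∧ F 1 = 1 ∧
      ∀ y ∈ Set.Icc (0:ℝ) 1, (Sec F y).Countable ∧ (Sec F y).encard = f y := by
  obtain ⟨A, B, hcard, hA, hB⟩ := hf.isLinePreindicatrix.exists_layers
  have hempty (y : ℝ) (hy : y ∉ Icc (0 : ℝ) 1) : A y = ∅ ∧ B y = ∅ := by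
    have hone : 1 + ((A y).encard + (B y).encard) = 1 + 0 := by
      rw [← add_assoc, hcard, mulIndicator_of_notMem hy, add_zero]
    simpa using ENat.add_right_injective_of_ne_top ENat.one_ne_top hone
  obtain ⟨ι, a, b, hab, hsub, hfin, hcount⟩ := exists_intervals_of_layers hA hB hempty
  obtain ⟨F, hcont, hmaps, hF₀, hF₁, hfibre⟩ := exists_realizes_of_intervals hab hsub hfin
  refine ⟨F, hcont, hmaps, hF₀, hF₁, fun y hy ↦ ⟨(hfibre y hy).1, ?_⟩⟩
  simp only [(hfibre y hy).2, (hcount y).1, (hcount y).2, hcard, mulIndicator_of_mem hy]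
end
end

section
/- Let f : [0,1] → ℕ∞ with f(y) ≥ 1 for all y. There exists a Darboux function F : [0,1] → [0,1] with F(0) = 0 and F(1) = 1 such that every section F⁻¹(y) is countable and the extended natural cardinality of F⁻¹(y) equals f(y) for every y ∈ [0,1], if and only if f satisfies Condition (1) and satisfies Condition (**) at every y with f(y) = ∞. -/
open Set

noncomputable section

/-- `F` has the intermediate value (Darboux) property on `[0,1]`. -/
def DarbouxFun (F : ℝ → ℝ) : Prop :=
  ∀ a b : ℝ, a ∈ Set.Icc (0:ℝ) 1 → b ∈ Set.Icc (0:ℝ) 1 → a ≤ b →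
    ∀ t ∈ Set.uIcc (F a) (F b), ∃ x ∈ Set.Icc a b, F x = t

/-!
Extend `F` by the identity and `f` by `1` to the whole line, so that the endpoints need no separate
treatment. List the points of a section over `y`. Between two consecutive ones, `F` makes an
excursion to one side of `y`, which adds two points to every nearby section on that side, and the
limits of `F` at `±∞` add one point on either side. So if the section has at least `n + 1` points,
then `n = i + j` with `f ≥ 2i + 1` just to the left and `f ≥ 2j + 1` just to the right of `y`. The
existence of these splittings is equivalent to Conditions (1) and (**).

Conversely, the splittings give a decomposition `f = 1 + k + l` in which `j ≤ k y` forces `j ≤ k`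
and `j ≤ l` just to the left of `y`, and `j ≤ l y` forces the same just to the right. Hence for each
`j` the sets `{j ≤ k}` and `{j ≤ l}` are the disjoint unions of the intervals `(c, d]` and `[c, d)`
for one countable family of pairs `c < d`. A loop that runs up and down `[c, d]` once adds one point
to the sections over `c` and `d` and two to those over `(c, d)`. Inserting all these loops into the
identity, at distinct points stretched to intervals, gives `F`.
-/

open Filter Topology

section Darboux

variable {F : ℝ → ℝ} {s t : Set ℝ}

/-- The intermediate value property of `F` on `s`, with no continuity assumed. -/
def DarbouxOn (F : ℝ → ℝ) (s : Set ℝ) : Prop :=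
  ∀ ⦃a⦄, a ∈ s → ∀ ⦃b⦄, b ∈ s → a ≤ b → uIcc (F a) (F b) ⊆ F '' Icc a b

theorem darbouxFun_iff_darbouxOn : DarbouxFun F ↔ DarbouxOn F (Icc 0 1) :=
  ⟨fun h a ha b hb hab t ht => h a b ha hb hab t ht,
    fun h _ _ ha hb hab _ ht => h ha hb hab ht⟩

namespace DarbouxOn

theorem of_continuousOn (hF : ContinuousOn F s) (hs : s.OrdConnected) : DarbouxOn F s := by
  intro a ha b hb hab
  have h := intermediate_value_uIcc (hF.mono (hs.uIcc_subset ha hb))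
  rwa [uIcc_of_le hab] at h

theorem congr {G : ℝ → ℝ} (hF : DarbouxOn F s) (hs : s.OrdConnected) (hFG : EqOn F G s) :
    DarbouxOn G s := by
  intro a ha b hb hab
  rw [← hFG ha, ← hFG hb, ← (hFG.mono (hs.out ha hb)).image_eq]
  exact hF ha hb hab

theorem union {p : ℝ} (hs : DarbouxOn F s) (ht : DarbouxOn F t) (hps : IsGreatest s p)
    (hpt : IsLeast t p) : DarbouxOn F (s ∪ t) := by
  rintro a ha b hb hab
  rcases ha with ha | ha <;> rcases hb with hb | hb
  · exact hs ha hb hab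
  · have hap := hps.2 ha
    have hpb := hpt.2 hb
    calc uIcc (F a) (F b) ⊆ uIcc (F a) (F p) ∪ uIcc (F p) (F b) := uIcc_subset_uIcc_union_uIcc
      _ ⊆ F '' Icc a p ∪ F '' Icc p b :=
        union_subset_union (hs ha hps.1 hap) (ht hpt.1 hb hpb)
      _ = F '' Icc a b := by rw [← image_union, Icc_union_Icc_eq_Icc hap hpb]
  · obtain rfl : a = b := le_antisymm hab ((hps.2 hb).trans (hpt.2 ha))
    exact hs hb hb hab
  · exact ht ha hb hab

theorem exists_mem_Ioo {a b z : ℝ} (hF : DarbouxOn F s) (ha : a ∈ s) (hb : b ∈ s) (hab : a ≤ b)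
    (hz : z ∈ uIoo (F a) (F b)) : ∃ x ∈ Ioo a b, F x = z := by
  obtain ⟨x, hx, rfl⟩ := hF ha hb hab (uIoo_subset_uIcc_self hz)
  have hxa : x ≠ a := by rintro rfl; exact left_notMem_uIoo hz
  have hxb : x ≠ b := by rintro rfl; exact right_notMem_uIoo hz
  exact ⟨x, ⟨hx.1.lt_of_ne' hxa, hx.2.lt_of_ne hxb⟩, rfl⟩

end DarbouxOn

end Darboux

/-- Near a point, `f ≥ 2 * i + 1` along `l` and `f ≥ 2 * j + 1` along `r` for some splitting
`n = i + j`. For a crossing number, with `l` and `r` the two sides of `y`, this says that the `n`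
points of the section over `y` other than the crossing one each add two points to the sections on
one fixed side of `y`. -/
def OddSplit {α : Type*} (f : α → ℕ∞) (l r : Filter α) (n : ℕ) : Prop :=
  ∃ i j : ℕ, i + j = n ∧ (∀ᶠ z in l, ((2 * i + 1 : ℕ) : ℕ∞) ≤ f z) ∧
    ∀ᶠ z in r, ((2 * j + 1 : ℕ) : ℕ∞) ≤ f z

section Necessity

theorem add_le_encard_of_disjoint {α : Type*} {s t u : Set α} {m n : ℕ∞} (hs : m ≤ s.encard)
    (ht : n ≤ t.encard) (hst : Disjoint s t) (hu : s ∪ t ⊆ u) : m + n ≤ u.encard :=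
  calc m + n ≤ s.encard + t.encard := add_le_add hs ht
    _ = (s ∪ t).encard := (encard_union_eq hst).symm
    _ ≤ u.encard := encard_le_encard hu

theorem exists_mem_le_encard_inter_Iio {α : Type*} [LinearOrder α] {s : Set α} {n : ℕ}
    (hs : ((n + 1 : ℕ) : ℕ∞) ≤ s.encard) : ∃ b ∈ s, (n : ℕ∞) ≤ (s ∩ Iio b).encard := by
  obtain ⟨t, hts, ht⟩ := exists_subset_encard_eq hs
  have htne : t.Nonempty := one_le_encard_iff_nonempty.1 (by simp [ht])
  obtain ⟨b, hbt, hb⟩ := exists_max_image t id (finite_of_encard_eq_coe ht) htne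
  have hcard : (t \ {b}).encard = n := by
    simpa [ht] using encard_sdiff_singleton_add_one hbt
  refine ⟨b, hts hbt, hcard.ge.trans (encard_le_encard fun x hx => ⟨hts hx.1, ?_⟩)⟩
  exact (hb x hx.1).lt_of_ne hx.2

variable {F : ℝ → ℝ} {y : ℝ}

theorem DarbouxOn.eventually_two_le_encard_inter_Ioo (hF : DarbouxOn F univ) {a b : ℝ}
    (hab : a < b) (ha : F a = y) (hb : F b = y) (hy : (F ⁻¹' {y}).Countable) :
    (∀ᶠ z in 𝓝[<] y, 2 ≤ (F ⁻¹' {z} ∩ Ioo a b).encard) ∨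
      ∀ᶠ z in 𝓝[>] y, 2 ≤ (F ⁻¹' {z} ∩ Ioo a b).encard := by
  obtain ⟨c, hc, hcy⟩ : ∃ c ∈ Ioo a b, F c ≠ y := by
    by_contra! h
    exact (Cardinal.Real.Ioo_countable_iff.not.2 hab.not_ge) (hy.mono h)
  have two_le {z : ℝ} (hz : z ∈ uIoo y (F c)) : 2 ≤ (F ⁻¹' {z} ∩ Ioo a b).encard := by
    obtain ⟨x₁, hx₁, rfl⟩ :=
      hF.exists_mem_Ioo (mem_univ a) (mem_univ c) hc.1.le (by rwa [ha])
    obtain ⟨x₂, hx₂, hx⟩ :=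
      hF.exists_mem_Ioo (mem_univ c) (mem_univ b) hc.2.le (by rwa [hb, uIoo_comm])
    rw [← encard_pair (hx₁.2.trans hx₂.1).ne]
    refine encard_le_encard (pair_subset ⟨rfl, hx₁.1, hx₁.2.trans hc.2⟩ ⟨hx, ?_⟩)
    exact ⟨hc.1.trans hx₂.1, hx₂.2⟩
  rcases hcy.lt_or_gt with hlt | hgt
  · left
    filter_upwards [Ioo_mem_nhdsLT hlt] with z hz
    exact two_le (by rwa [uIoo_of_ge hlt.le])
  · right
    filter_upwards [Ioo_mem_nhdsGT hgt] with z hz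
    exact two_le (by rwa [uIoo_of_le hgt.le])

/-- The points of the section to the left of `a` are consumed from right to left: each excursion of
`F` between consecutive ones adds two points to all nearby sections on one side of `y`. -/
theorem DarbouxOn.exists_split_encard_inter_Iio (hF : DarbouxOn F univ)
    (hbot : Tendsto F atBot atBot) (hy : (F ⁻¹' {y}).Countable) (n : ℕ) {a : ℝ} (ha : F a = y)
    (hn : (n : ℕ∞) ≤ (F ⁻¹' {y} ∩ Iio a).encard) :
    ∃ i j : ℕ, i + j = n ∧
      (∀ᶠ z in 𝓝[<] y, ((2 * i + 1 : ℕ) : ℕ∞) ≤ (F ⁻¹' {z} ∩ Iio a).encard) ∧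
      ∀ᶠ z in 𝓝[>] y, ((2 * j : ℕ) : ℕ∞) ≤ (F ⁻¹' {z} ∩ Iio a).encard := by
  induction n generalizing a with
  | zero =>
    refine ⟨0, 0, rfl, ?_, by simp⟩
    filter_upwards [self_mem_nhdsWithin] with z (hz : z < y)
    obtain ⟨b, hba, hbz⟩ :=
      ((eventually_lt_atBot a).and (hbot.eventually_lt_atBot z)).exists
    obtain ⟨x, hx, rfl⟩ := hF.exists_mem_Ioo (z := z) (mem_univ b) (mem_univ a) hba.le
      (by rw [ha, uIoo_of_le (hbz.trans hz).le]; exact ⟨hbz, hz⟩)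
    exact one_le_encard_iff_nonempty.2 ⟨x, rfl, hx.2⟩
  | succ n ih =>
    obtain ⟨b, ⟨hb, hba⟩, hbn⟩ := exists_mem_le_encard_inter_Iio hn
    rw [inter_assoc, inter_eq_right.2 (Iio_subset_Iio (le_of_lt hba))] at hbn
    have add_le {z : ℝ} {m : ℕ} (hm : (m : ℕ∞) ≤ (F ⁻¹' {z} ∩ Iio b).encard)
        (h2 : 2 ≤ (F ⁻¹' {z} ∩ Ioo b a).encard) :
        ((m + 2 : ℕ) : ℕ∞) ≤ (F ⁻¹' {z} ∩ Iio a).encard := by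
      push_cast
      refine add_le_encard_of_disjoint hm h2 ?_ ?_
      · exact disjoint_left.2 fun x hx hx' => lt_asymm hx.2 hx'.2.1
      · exact union_subset (inter_subset_inter_right _ (Iio_subset_Iio (le_of_lt hba)))
          (inter_subset_inter_right _ Ioo_subset_Iio_self)
    have mono {z : ℝ} : (F ⁻¹' {z} ∩ Iio b).encard ≤ (F ⁻¹' {z} ∩ Iio a).encard :=
      encard_le_encard (inter_subset_inter_right _ (Iio_subset_Iio (le_of_lt hba)))
    obtain ⟨i, j, rfl, hi, hj⟩ := ih hb hbn
    rcases hF.eventually_two_le_encard_inter_Ioo hba hb ha hy with h2 | h2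
    · refine ⟨i + 1, j, by ring, ?_, hj.mono fun z hz => hz.trans mono⟩
      filter_upwards [hi, h2] with z hz hz2 using add_le hz hz2
    · refine ⟨i, j + 1, by ring, hi.mono fun z hz => hz.trans mono, ?_⟩
      filter_upwards [hj, h2] with z hz hz2 using add_le hz hz2

theorem DarbouxOn.oddSplit_encard (hF : DarbouxOn F univ) (hbot : Tendsto F atBot atBot)
    (htop : Tendsto F atTop atTop) (hy : (F ⁻¹' {y}).Countable) {n : ℕ}
    (hn : ((n + 1 : ℕ) : ℕ∞) ≤ (F ⁻¹' {y}).encard) :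
    OddSplit (fun z => (F ⁻¹' {z}).encard) (𝓝[<] y) (𝓝[>] y) n := by
  obtain ⟨a, ha, han⟩ := exists_mem_le_encard_inter_Iio hn
  obtain ⟨i, j, hij, hi, hj⟩ := hF.exists_split_encard_inter_Iio hbot hy n ha han
  refine ⟨i, j, hij, hi.mono fun z hz => hz.trans (encard_le_encard inter_subset_left), ?_⟩
  filter_upwards [hj, self_mem_nhdsWithin] with z hz (hyz : y < z)
  obtain ⟨b, hab, hzb⟩ := ((eventually_gt_atTop a).and (htop.eventually_gt_atTop z)).exists
  obtain ⟨x, hx, rfl⟩ := hF.exists_mem_Ioo (z := z) (mem_univ a) (mem_univ b) hab.le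
    (by rw [show F a = y from ha, uIoo_of_le (hyz.trans hzb).le]; exact ⟨hyz, hzb⟩)
  push_cast at hz ⊢
  refine add_le_encard_of_disjoint hz (encard_singleton x).ge ?_ ?_
  · exact disjoint_singleton_right.2 fun h => lt_asymm hx.1 h.2
  · exact union_subset inter_subset_left (singleton_subset_iff.2 rfl)

end Necessity

section Conditions

variable {α : Type*} {f : α → ℕ∞} {l r : Filter α} {n : ℕ}

/-- The relation that Condition (1) imposes between the value `m` at a point and the values `a`, `b`
at nearby points on its two sides. -/
def TwiceLE (m a b : ℕ∞) : Prop :=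
  2 * m ≤ a + b ∧ (a + b = 2 * m → (∃ k : ℕ, a = k ∧ Odd k) ∧ ∃ k : ℕ, b = k ∧ Odd k)

theorem twiceLE_one_left_iff {m b : ℕ∞} (hm : m ≠ ⊤) : TwiceLE m 1 b ↔ 2 * m ≤ 1 + b := by
  refine ⟨And.left, fun h => ⟨h, fun heq => ⟨⟨1, rfl, odd_one⟩, ?_⟩⟩⟩
  lift m to ℕ using hm
  have hb : b ≠ ⊤ := by
    rintro rfl
    exact absurd heq (by norm_cast)
  lift b to ℕ using hb
  norm_cast at heq
  exact ⟨b, rfl, m - 1, by omega⟩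

theorem twiceLE_comm {m a b : ℕ∞} : TwiceLE m a b ↔ TwiceLE m b a := by
  rw [TwiceLE, TwiceLE, add_comm a, and_comm (a := ∃ k : ℕ, a = k ∧ Odd k)]

theorem twiceLE_one_right_iff {m a : ℕ∞} (hm : m ≠ ⊤) : TwiceLE m a 1 ↔ 2 * m ≤ a + 1 := by
  rw [twiceLE_comm, twiceLE_one_left_iff hm, add_comm]

theorem not_twiceLE_of_le_two_mul {i j : ℕ} {m a b : ℕ∞} (hm : ((i + j : ℕ) : ℕ∞) ≤ m)
    (ha : a ≤ (2 * i : ℕ)) (hb : b ≤ (2 * j : ℕ)) : ¬ TwiceLE m a b := by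
  rintro ⟨hle, hodd⟩
  lift a to ℕ using (ha.trans_lt (ENat.natCast_lt_top _)).ne
  lift b to ℕ using (hb.trans_lt (ENat.natCast_lt_top _)).ne
  have hm_top : m ≠ ⊤ := by
    rintro rfl
    exact absurd hle (by norm_cast)
  lift m to ℕ using hm_top
  norm_cast at hle hodd ha hb hm
  obtain ⟨⟨k, hak, hk⟩, -⟩ := hodd (by omega)
  have hai : a = 2 * i := by omega
  exact Nat.not_odd_iff_even.2 ⟨i, by omega⟩ hk

theorem twiceLE_of_two_mul_add_one_le {i j : ℕ} {a b : ℕ∞} (ha : ((2 * i + 1 : ℕ) : ℕ∞) ≤ a)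
    (hb : ((2 * j + 1 : ℕ) : ℕ∞) ≤ b) : TwiceLE ((i + j + 1 : ℕ) : ℕ∞) a b := by
  refine ⟨?_, fun h => ?_⟩
  · calc 2 * ((i + j + 1 : ℕ) : ℕ∞) = ((2 * i + 1 : ℕ) : ℕ∞) + ((2 * j + 1 : ℕ) : ℕ∞) := by
          norm_cast; ring
      _ ≤ a + b := add_le_add ha hb
  · have hab : a + b ≠ ⊤ := by rw [h]; norm_cast; exact ENat.natCast_ne_top _
    lift a to ℕ using fun ha => hab (by simp [ha])
    lift b to ℕ using fun hb => hab (by simp [hb])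
    norm_cast at h ha hb
    exact ⟨⟨a, rfl, i, by omega⟩, ⟨b, rfl, j, by omega⟩⟩

theorem exists_frequently_le_of_not_oddSplit (hl : ∀ᶠ z in l, 1 ≤ f z) (hr : ∀ᶠ z in r, 1 ≤ f z)
    (h : ¬ OddSplit f l r n) :
    ∃ i j : ℕ, i + j = n + 1 ∧ (∃ᶠ z in l, f z ≤ (2 * i : ℕ)) ∧ ∃ᶠ z in r, f z ≤ (2 * j : ℕ) := by
  have two_mul_add_one_le_iff {k : ℕ} {m : ℕ∞} :
      ((2 * k + 1 : ℕ) : ℕ∞) ≤ m ↔ ¬ m ≤ (2 * k : ℕ) := by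
    rw [not_le, Nat.cast_succ, ENat.add_one_le_iff (ENat.natCast_ne_top _)]
  by_contra hcon
  have left_le : ∀ i ≤ n, ∀ᶠ z in l, ((2 * i + 1 : ℕ) : ℕ∞) ≤ f z := by
    intro i hi
    induction i with
    | zero => simpa using hl
    | succ i ih =>
      have hright : ∃ᶠ z in r, f z ≤ (2 * (n - i) : ℕ) := fun hj =>
        h ⟨i, n - i, by omega, ih (by omega), hj.mono fun z hz => two_mul_add_one_le_iff.2 hz⟩
      have hleft : ¬ ∃ᶠ z in l, f z ≤ (2 * (i + 1) : ℕ) := fun hi' =>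
        hcon ⟨i + 1, n - i, by omega, hi', hright⟩
      exact (not_frequently.1 hleft).mono fun z hz => two_mul_add_one_le_iff.2 hz
  exact h ⟨n, 0, rfl, left_le n le_rfl, by simpa using hr⟩

theorem oddSplit_of_eventually_prod {Q : ℕ∞ → ℕ∞ → Prop} (hl : ∀ᶠ z in l, 1 ≤ f z)
    (hr : ∀ᶠ z in r, 1 ≤ f z) (h : ∀ᶠ p in l ×ˢ r, Q (f p.1) (f p.2))
    (hQ : ∀ i j : ℕ, i + j = n + 1 → ∀ a ≤ ((2 * i : ℕ) : ℕ∞), ∀ b ≤ ((2 * j : ℕ) : ℕ∞), ¬ Q a b) :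
    OddSplit f l r n := by
  by_contra hsplit
  obtain ⟨i, j, hij, hi, hj⟩ := exists_frequently_le_of_not_oddSplit hl hr hsplit
  obtain ⟨p, ⟨hp₁, hp₂⟩, hp⟩ := ((frequently_prod_and.2 ⟨hi, hj⟩).and_eventually h).exists
  exact hQ i j hij _ hp₁ _ hp₂ hp

theorem forall_oddSplit_iff_eventually_twiceLE (hl : ∀ᶠ z in l, 1 ≤ f z)
    (hr : ∀ᶠ z in r, 1 ≤ f z) {m : ℕ∞} (hm : 1 ≤ m) (hm_top : m ≠ ⊤) :
    (∀ n : ℕ, ((n + 1 : ℕ) : ℕ∞) ≤ m → OddSplit f l r n) ↔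
      ∀ᶠ p in l ×ˢ r, TwiceLE m (f p.1) (f p.2) := by
  refine ⟨fun h => ?_, fun h n hn => ?_⟩
  · lift m to ℕ using hm_top
    obtain ⟨n, rfl⟩ : ∃ n, m = n + 1 := Nat.exists_eq_add_of_le' (by exact_mod_cast hm)
    obtain ⟨i, j, rfl, hi, hj⟩ := h n le_rfl
    filter_upwards [hi.prod_mk hj] with p hp using twiceLE_of_two_mul_add_one_le hp.1 hp.2
  · exact oddSplit_of_eventually_prod hl hr h fun i j hij a ha b hb =>
      not_twiceLE_of_le_two_mul (hij ▸ hn) ha hb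

theorem forall_oddSplit_iff_eventually_le_add (hl : ∀ᶠ z in l, 1 ≤ f z)
    (hr : ∀ᶠ z in r, 1 ≤ f z) :
    (∀ n : ℕ, OddSplit f l r n) ↔ ∀ n : ℕ, ∀ᶠ p in l ×ˢ r, (n : ℕ∞) ≤ f p.1 + f p.2 := by
  refine ⟨fun h n => ?_, fun h n => ?_⟩
  · obtain ⟨i, j, rfl, hi, hj⟩ := h n
    filter_upwards [hi.prod_mk hj] with p hp
    calc ((i + j : ℕ) : ℕ∞) ≤ ((2 * i + 1 : ℕ) : ℕ∞) + ((2 * j + 1 : ℕ) : ℕ∞) := by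
          norm_cast; omega
      _ ≤ f p.1 + f p.2 := add_le_add hp.1 hp.2
  · refine oddSplit_of_eventually_prod hl hr (Q := fun a b => ((2 * n + 3 : ℕ) : ℕ∞) ≤ a + b)
      (h _) fun i j hij a ha b hb hab => ?_
    have := hab.trans (add_le_add ha hb)
    norm_cast at this
    omega

end Conditions

section Extension

/-- The extension of a crossing number on `[0, 1]` by `1` to the whole line, which makes the
conventions of Conditions (1) and (**) at the endpoints instances of the interior conditions. -/
def extendOne (f : ℝ → ℕ∞) : ℝ → ℕ∞ := (Icc 0 1).piecewise f 1

/-- The extension of a function on `[0, 1]` by the identity to the whole line; its sections have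
the cardinalities given by `extendOne`. -/
def extendId (F : ℝ → ℝ) : ℝ → ℝ := (Icc 0 1).piecewise F id

variable {f : ℝ → ℕ∞} {F : ℝ → ℝ} {y : ℝ}

theorem extendOne_of_mem (hy : y ∈ Icc 0 1) : extendOne f y = f y :=
  piecewise_eq_of_mem _ _ _ hy

theorem extendOne_of_notMem (hy : y ∉ Icc 0 1) : extendOne f y = 1 :=
  piecewise_eq_of_notMem _ _ _ hy

theorem one_le_extendOne (hf : ∀ y ∈ Icc 0 1, 1 ≤ f y) (y : ℝ) : 1 ≤ extendOne f y := by
  by_cases hy : y ∈ Icc 0 1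
  · exact (hf y hy).trans_eq (extendOne_of_mem hy).symm
  · exact (extendOne_of_notMem hy).ge

theorem extendId_of_mem (hy : y ∈ Icc 0 1) : extendId F y = F y :=
  piecewise_eq_of_mem _ _ _ hy

theorem extendId_of_notMem (hy : y ∉ Icc 0 1) : extendId F y = y :=
  piecewise_eq_of_notMem _ _ _ hy

theorem extendId_of_notMem_Ioo (h0 : F 0 = 0) (h1 : F 1 = 1) (hy : y ∉ Ioo 0 1) :
    extendId F y = y := by
  by_cases hy' : y ∈ Icc 0 1
  · rw [extendId_of_mem hy']
    rcases eq_endpoints_or_mem_Ioo_of_mem_Icc hy' with rfl | rfl | h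
    exacts [h0, h1, absurd h hy]
  · exact extendId_of_notMem hy'

theorem extendId_preimage_of_mem (hy : y ∈ Icc 0 1) :
    extendId F ⁻¹' {y} = Sec F y := by
  ext x
  by_cases hx : x ∈ Icc 0 1
  · simp only [mem_preimage, extendId_of_mem hx, Sec, mem_singleton_iff, mem_ofPred_eq, hx,
      true_and]
  · simp only [mem_preimage, extendId_of_notMem hx, Sec, mem_singleton_iff, mem_ofPred_eq, hx,
      false_and, iff_false]
    exact fun h => hx (h ▸ hy)

theorem extendId_preimage_of_notMem (hF : MapsTo F (Icc 0 1) (Icc 0 1)) (hy : y ∉ Icc 0 1) :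
    extendId F ⁻¹' {y} = {y} := by
  ext x
  rw [mem_preimage, mem_singleton_iff, mem_singleton_iff]
  by_cases hx : x ∈ Icc 0 1
  · rw [extendId_of_mem hx]
    exact iff_of_false (fun h => hy (h ▸ hF hx)) fun h => hy (h ▸ hx)
  · rw [extendId_of_notMem hx]

theorem encard_extendId_preimage (hF : MapsTo F (Icc 0 1) (Icc 0 1))
    (hFf : ∀ y ∈ Icc 0 1, (Sec F y).encard = f y) (y : ℝ) :
    (extendId F ⁻¹' {y}).encard = extendOne f y := by
  by_cases hy : y ∈ Icc 0 1
  · rw [extendId_preimage_of_mem hy, extendOne_of_mem hy, hFf y hy]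
  · rw [extendId_preimage_of_notMem hF hy, extendOne_of_notMem hy, encard_singleton]

theorem darbouxOn_extendId (hF : DarbouxOn F (Icc 0 1)) (h0 : F 0 = 0) (h1 : F 1 = 1) :
    DarbouxOn (extendId F) univ := by
  have hmid : EqOn F (extendId F) (Icc 0 1) := fun x hx => (extendId_of_mem hx).symm
  have hleft : EqOn id (extendId F) (Iic 0) := fun x hx =>
    (extendId_of_notMem_Ioo h0 h1 fun h => h.1.not_ge hx).symm
  have hright : EqOn id (extendId F) (Ici 1) := fun x hx =>
    (extendId_of_notMem_Ioo h0 h1 fun h => h.2.not_ge hx).symm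
  have hid {s : Set ℝ} (hs : s.OrdConnected) (h : EqOn id (extendId F) s) :
      DarbouxOn (extendId F) s := (DarbouxOn.of_continuousOn continuousOn_id hs).congr hs h
  have hglue := ((hid ordConnected_Iic hleft).union (hF.congr ordConnected_Icc hmid)
    isGreatest_Iic (isLeast_Icc zero_le_one)).union (hid ordConnected_Ici hright) (p := 1)
    ⟨by simp, by rintro x (hx | hx); exacts [le_trans hx zero_le_one, hx.2]⟩ isLeast_Ici
  rwa [Iic_union_Icc_eq_Iic zero_le_one, Iic_union_Ici] at hglue

theorem oddSplit_extendOne_of_encard_sec (hF : DarbouxOn F (Icc 0 1))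
    (hmaps : MapsTo F (Icc 0 1) (Icc 0 1)) (h0 : F 0 = 0) (h1 : F 1 = 1)
    (hFf : ∀ y ∈ Icc 0 1, (Sec F y).encard = f y) (hy : y ∈ Icc 0 1) (hyc : (Sec F y).Countable)
    {n : ℕ} (hn : ((n + 1 : ℕ) : ℕ∞) ≤ f y) : OddSplit (extendOne f) (𝓝[<] y) (𝓝[>] y) n := by
  have hbot : id =ᶠ[atBot] extendId F := by
    filter_upwards [eventually_lt_atBot 0] with x hx
    exact (extendId_of_notMem fun h => hx.not_ge h.1).symm
  have htop : id =ᶠ[atTop] extendId F := by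
    filter_upwards [eventually_gt_atTop 1] with x hx
    exact (extendId_of_notMem fun h => hx.not_ge h.2).symm
  rw [← funext (encard_extendId_preimage hmaps hFf)]
  refine (darbouxOn_extendId hF h0 h1).oddSplit_encard (tendsto_id.congr' hbot)
    (tendsto_id.congr' htop) ?_ ?_
  · rwa [extendId_preimage_of_mem hy]
  · rwa [extendId_preimage_of_mem hy, hFf y hy]

theorem eventually_nhdsLT_prod_nhdsGT_iff {P : ℝ → ℝ → Prop} :
    (∀ᶠ p in 𝓝[<] y ×ˢ 𝓝[>] y, P p.1 p.2) ↔
      ∃ ε > 0, ∀ y₁ y₂, y - ε < y₁ → y₁ < y → y < y₂ → y₂ < y + ε → P y₁ y₂ := by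
  have hbasis := (nhdsLT_basis_of_exists_lt (exists_lt y)).prod
    (nhdsGT_basis_of_exists_gt (exists_gt y))
  rw [hbasis.eventually_iff]
  constructor
  · rintro ⟨⟨a, b⟩, ⟨hay, hyb⟩, h⟩
    dsimp only at hay hyb
    refine ⟨min (y - a) (b - y), lt_min (sub_pos.2 hay) (sub_pos.2 hyb),
      fun y₁ y₂ h₁ h₁' h₂ h₂' => h (x := (y₁, y₂)) ⟨⟨?_, h₁'⟩, h₂, ?_⟩⟩
    · linarith [min_le_left (y - a) (b - y)]
    · linarith [min_le_right (y - a) (b - y)]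
  · rintro ⟨ε, hε, h⟩
    exact ⟨(y - ε, y + ε), ⟨sub_lt_self y hε, lt_add_of_pos_right y hε⟩,
      fun p hp => h p.1 p.2 hp.1.1 hp.1.2 hp.2.1 hp.2.2⟩

theorem eventually_extendOne_iff_of_mem_Ioo {Q : ℕ∞ → ℕ∞ → Prop} (hy : y ∈ Ioo 0 1) :
    (∀ᶠ p in 𝓝[<] y ×ˢ 𝓝[>] y, Q (extendOne f p.1) (extendOne f p.2)) ↔
      ∃ ε > 0, ∀ y₁ ∈ Icc (0 : ℝ) 1, ∀ y₂ ∈ Icc (0 : ℝ) 1,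
        y - ε < y₁ → y₁ < y → y < y₂ → y₂ < y + ε → Q (f y₁) (f y₂) := by
  have hmem : Icc (0 : ℝ) 1 ∈ 𝓝 y := Icc_mem_nhds hy.1 hy.2
  have hcongr : ∀ᶠ p in 𝓝[<] y ×ˢ 𝓝[>] y, Q (extendOne f p.1) (extendOne f p.2) ↔
      (p.1 ∈ Icc (0 : ℝ) 1 → p.2 ∈ Icc (0 : ℝ) 1 → Q (f p.1) (f p.2)) := by
    filter_upwards [prod_mem_prod (nhdsWithin_le_nhds hmem) (nhdsWithin_le_nhds hmem)]
      with p hp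
    simp only [extendOne_of_mem hp.1, extendOne_of_mem hp.2, hp.1, hp.2, true_imp_iff]
  rw [eventually_congr hcongr,
    eventually_nhdsLT_prod_nhdsGT_iff (P := fun y₁ y₂ =>
      y₁ ∈ Icc (0 : ℝ) 1 → y₂ ∈ Icc (0 : ℝ) 1 → Q (f y₁) (f y₂))]
  exact exists_congr fun ε => and_congr_right fun _ =>
    ⟨fun h y₁ m₁ y₂ m₂ h₁ h₁' h₂ h₂' => h y₁ y₂ h₁ h₁' h₂ h₂' m₁ m₂,
      fun h y₁ y₂ h₁ h₁' h₂ h₂' m₁ m₂ => h y₁ m₁ y₂ m₂ h₁ h₁' h₂ h₂'⟩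

theorem eventually_extendOne_zero_iff {Q : ℕ∞ → ℕ∞ → Prop} :
    (∀ᶠ p in 𝓝[<] (0 : ℝ) ×ˢ 𝓝[>] (0 : ℝ), Q (extendOne f p.1) (extendOne f p.2)) ↔
      ∃ ε > 0, ∀ y₂ ∈ Icc (0 : ℝ) 1, 0 < y₂ → y₂ < ε → Q 1 (f y₂) := by
  have hcongr : ∀ᶠ p in 𝓝[<] (0 : ℝ) ×ˢ 𝓝[>] (0 : ℝ), Q (extendOne f p.1) (extendOne f p.2) ↔
      (p.2 ∈ Icc (0 : ℝ) 1 → Q 1 (f p.2)) := by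
    filter_upwards [prod_mem_prod self_mem_nhdsWithin (Ioc_mem_nhdsGT one_pos)] with p hp
    have hp₁ : p.1 ∉ Icc (0 : ℝ) 1 := fun h => h.1.not_gt hp.1
    have hp₂ : p.2 ∈ Icc (0 : ℝ) 1 := Ioc_subset_Icc_self hp.2
    simp only [extendOne_of_notMem hp₁, extendOne_of_mem hp₂, hp₂, true_imp_iff]
  rw [eventually_congr hcongr,
    eventually_nhdsLT_prod_nhdsGT_iff (P := fun _ y₂ =>
      y₂ ∈ Icc (0 : ℝ) 1 → Q 1 (f y₂))]
  refine exists_congr fun ε => and_congr_right fun hε =>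
    ⟨fun h y₂ m₂ h₂ h₂' => h (-(ε / 2)) y₂ ?_ ?_ h₂ ?_ m₂,
      fun h _ y₂ _ _ h₂ h₂' m₂ => h y₂ m₂ h₂ ?_⟩ <;> linarith

theorem eventually_extendOne_one_iff {Q : ℕ∞ → ℕ∞ → Prop} :
    (∀ᶠ p in 𝓝[<] (1 : ℝ) ×ˢ 𝓝[>] (1 : ℝ), Q (extendOne f p.1) (extendOne f p.2)) ↔
      ∃ ε > 0, ∀ y₁ ∈ Icc (0 : ℝ) 1, 1 - ε < y₁ → y₁ < 1 → Q (f y₁) 1 := by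
  have hcongr : ∀ᶠ p in 𝓝[<] (1 : ℝ) ×ˢ 𝓝[>] (1 : ℝ), Q (extendOne f p.1) (extendOne f p.2) ↔
      (p.1 ∈ Icc (0 : ℝ) 1 → Q (f p.1) 1) := by
    filter_upwards [prod_mem_prod (Ico_mem_nhdsLT one_pos) self_mem_nhdsWithin] with p hp
    have hp₁ : p.1 ∈ Icc (0 : ℝ) 1 := Ico_subset_Icc_self hp.1
    have hp₂ : p.2 ∉ Icc (0 : ℝ) 1 := fun h => h.2.not_gt hp.2
    simp only [extendOne_of_mem hp₁, extendOne_of_notMem hp₂, hp₁, true_imp_iff]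
  rw [eventually_congr hcongr, eventually_nhdsLT_prod_nhdsGT_iff (P := fun y₁ _ =>
    y₁ ∈ Icc (0 : ℝ) 1 → Q (f y₁) 1)]
  refine exists_congr fun ε => and_congr_right fun hε =>
    ⟨fun h y₁ m₁ h₁ h₁' => h y₁ (1 + ε / 2) h₁ h₁' ?_ ?_ m₁,
      fun h y₁ _ h₁ h₁' _ _ m₁ => h y₁ m₁ h₁ h₁'⟩ <;> linarith

theorem cond1_iff_eventually_twiceLE : Cond1 f ↔ ∀ y ∈ Icc (0 : ℝ) 1, f y ≠ ⊤ →
    ∀ᶠ p in 𝓝[<] y ×ˢ 𝓝[>] y, TwiceLE (f y) (extendOne f p.1) (extendOne f p.2) := by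
  constructor
  · rintro ⟨hIoo, h0, h1⟩ y hy hy_top
    rcases eq_endpoints_or_mem_Ioo_of_mem_Icc hy with rfl | rfl | hy
    · rw [eventually_extendOne_zero_iff (Q := TwiceLE (f 0))]
      simpa only [twiceLE_one_left_iff hy_top] using h0 hy_top
    · rw [eventually_extendOne_one_iff (Q := TwiceLE (f 1))]
      simpa only [twiceLE_one_right_iff hy_top] using h1 hy_top
    · exact (eventually_extendOne_iff_of_mem_Ioo hy).2 (hIoo y hy hy_top)
  · intro h
    refine ⟨fun y hy hy_top => ?_, fun h0 => ?_, fun h1 => ?_⟩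
    · exact (eventually_extendOne_iff_of_mem_Ioo hy).1 (h y (Ioo_subset_Icc_self hy) hy_top)
    · simpa only [eventually_extendOne_zero_iff (Q := TwiceLE (f 0)), twiceLE_one_left_iff h0]
        using h 0 (left_mem_Icc.2 zero_le_one) h0
    · simpa only [eventually_extendOne_one_iff (Q := TwiceLE (f 1)), twiceLE_one_right_iff h1]
        using h 1 (right_mem_Icc.2 zero_le_one) h1

theorem condStar_iff_eventually_le_add (hy : y ∈ Icc 0 1) : CondStar f y ↔
    ∀ n : ℕ, ∀ᶠ p in 𝓝[<] y ×ˢ 𝓝[>] y, (n : ℕ∞) ≤ extendOne f p.1 + extendOne f p.2 := by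
  refine forall_congr' fun n => ?_
  rcases eq_endpoints_or_mem_Ioo_of_mem_Icc hy with rfl | rfl | hy
  · rw [eventually_extendOne_zero_iff (Q := fun a b => (n : ℕ∞) ≤ a + b)]
    refine exists_congr fun ε => and_congr_right fun _ =>
      ⟨fun h => h.2.1 rfl, fun h => ⟨?_, fun _ => h, ?_⟩⟩
    · exact fun y₁ m₁ _ _ _ h₁ => absurd h₁ m₁.1.not_gt
    · exact fun h01 => absurd h01 zero_ne_one
  · rw [eventually_extendOne_one_iff (Q := fun a b => (n : ℕ∞) ≤ a + b)]
    refine exists_congr fun ε => and_congr_right fun _ =>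
      ⟨fun h => h.2.2 rfl, fun h => ⟨?_, ?_, fun _ => h⟩⟩
    · exact fun _ _ y₂ m₂ _ _ h₂ => absurd h₂ m₂.2.not_gt
    · exact fun h10 => absurd h10 one_ne_zero
  · rw [eventually_extendOne_iff_of_mem_Ioo (Q := fun a b => (n : ℕ∞) ≤ a + b) hy]
    refine exists_congr fun ε => and_congr_right fun _ => ⟨And.left, fun h => ⟨h, ?_, ?_⟩⟩
    · exact fun h0 => absurd h0 hy.1.ne'
    · exact fun h1 => absurd h1 hy.2.ne

theorem cond1_and_condStar_iff_oddSplit (hf : ∀ y ∈ Icc 0 1, 1 ≤ f y) :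
    (Cond1 f ∧ ∀ y ∈ Icc (0 : ℝ) 1, f y = ⊤ → CondStar f y) ↔
      ∀ y ∈ Icc (0 : ℝ) 1, ∀ n : ℕ, ((n + 1 : ℕ) : ℕ∞) ≤ f y →
        OddSplit (extendOne f) (𝓝[<] y) (𝓝[>] y) n := by
  have hone (l : Filter ℝ) : ∀ᶠ z in l, 1 ≤ extendOne f z := .of_forall (one_le_extendOne hf)
  rw [cond1_iff_eventually_twiceLE, ← forall₂_and]
  refine forall₂_congr fun y hy => ?_
  by_cases hy_top : f y = ⊤
  · simp only [hy_top, ne_eq, not_true_eq_false, false_imp_iff, true_and, true_imp_iff, le_top,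
      condStar_iff_eventually_le_add hy, forall_oddSplit_iff_eventually_le_add (hone _) (hone _)]
  · simp only [hy_top, ne_eq, not_false_eq_true, true_imp_iff, false_imp_iff, and_true,
      forall_oddSplit_iff_eventually_twiceLE (hone _) (hone _) (hf y hy) hy_top]

theorem oddSplit_extendOne_of_forall_mem_Icc (hf : ∀ y ∈ Icc 0 1, 1 ≤ f y)
    (hsplit : ∀ y ∈ Icc (0 : ℝ) 1, ∀ n : ℕ, ((n + 1 : ℕ) : ℕ∞) ≤ f y →
      OddSplit (extendOne f) (𝓝[<] y) (𝓝[>] y) n)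
    {n : ℕ} (hn : ((n + 1 : ℕ) : ℕ∞) ≤ extendOne f y) :
    OddSplit (extendOne f) (𝓝[<] y) (𝓝[>] y) n := by
  by_cases hy : y ∈ Icc 0 1
  · exact hsplit y hy n (hn.trans_eq (extendOne_of_mem hy))
  · obtain rfl : n = 0 := by
      rw [extendOne_of_notMem hy] at hn
      have : n + 1 ≤ 1 := by exact_mod_cast hn
      lia
    exact ⟨0, 0, rfl, .of_forall (by simpa using one_le_extendOne hf),
      .of_forall (by simpa using one_le_extendOne hf)⟩

end Extension

section Multiplicities

theorem exists_natCast_le_iff_of_antitone {P : ℕ → Prop} (h0 : P 0) (hP : Antitone P) :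
    ∃ k : ℕ∞, ∀ j : ℕ, (j : ℕ∞) ≤ k ↔ P j := by
  classical
  by_cases hall : ∀ j, P j
  · exact ⟨⊤, fun j => by simp only [le_top, hall j]⟩
  · rw [not_forall] at hall
    have hpos : Nat.find hall ≠ 0 := fun h => Nat.find_spec hall (h ▸ h0)
    refine ⟨(Nat.find hall - 1 : ℕ), fun j => ?_⟩
    rw [Nat.cast_le, Nat.le_sub_one_iff_lt (Nat.pos_of_ne_zero hpos)]
    exact ⟨fun hj => not_not.1 (Nat.find_min hall hj),
      fun hj => lt_of_not_ge fun hle => Nat.find_spec hall (hP hle hj)⟩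

theorem exists_balanced_add_eq_nat {m a b : ℕ} (h : m ≤ a + b) :
    ∃ k l : ℕ, k + l = m ∧ k ≤ a ∧ l ≤ b ∧
      ∀ j, 2 * j ≤ m → j ≤ a → j ≤ b → j ≤ k ∧ j ≤ l :=
  ⟨max (min a (m / 2)) (m - b), m - max (min a (m / 2)) (m - b), by omega, by omega, by omega,
    fun j _ _ _ => by omega⟩

theorem exists_balanced_add_eq {m a b : ℕ∞} (h : m ≤ a + b) :
    ∃ k l : ℕ∞, k + l = m ∧ k ≤ a ∧ l ≤ b ∧
      ∀ j : ℕ, (2 * j : ℕ) ≤ m → j ≤ a → j ≤ b → j ≤ k ∧ j ≤ l := by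
  rcases eq_or_ne m ⊤ with rfl | hm
  · exact ⟨a, b, top_le_iff.1 h, le_rfl, le_rfl, fun j _ ha hb => ⟨ha, hb⟩⟩
  lift m to ℕ using hm
  obtain ⟨a', ha'⟩ := ENat.ne_top_iff_exists.1 (ne_top_of_le_ne_top (ENat.natCast_ne_top m)
    (min_le_right a m))
  obtain ⟨b', hb'⟩ := ENat.ne_top_iff_exists.1 (ne_top_of_le_ne_top (ENat.natCast_ne_top m)
    (min_le_right b m))
  have hab : m ≤ a' + b' := by
    have : (m : ℕ∞) ≤ min a m + min b m := by
      rcases le_total a m with ha | ha <;> rcases le_total b m with hb | hb <;> simp [ha, hb, h]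
    rw [← ha', ← hb'] at this
    exact_mod_cast this
  obtain ⟨k, l, hkl, hk, hl, hj⟩ := exists_balanced_add_eq_nat hab
  refine ⟨k, l, by exact_mod_cast hkl, ?_, ?_, fun j hjm hja hjb => ?_⟩
  · exact (Nat.cast_le.2 hk).trans (ha' ▸ min_le_left _ _)
  · exact (Nat.cast_le.2 hl).trans (hb' ▸ min_le_left _ _)
  · have hjm' : (j : ℕ∞) ≤ m := le_trans (by norm_cast; omega) hjm
    have hja' : (j : ℕ∞) ≤ a' := ha' ▸ le_min hja hjm'
    have hjb' : (j : ℕ∞) ≤ b' := hb' ▸ le_min hjb hjm'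
    norm_cast at *
    exact hj j hjm hja' hjb'

variable {f : ℝ → ℕ∞} {y : ℝ}

theorem exists_balanced_side_bounds (hf : 1 ≤ f y)
    (hsplit : ∀ n : ℕ, ((n + 1 : ℕ) : ℕ∞) ≤ f y → OddSplit f (𝓝[<] y) (𝓝[>] y) n) :
    ∃ k l : ℕ∞, f y = 1 + k + l ∧
      (∀ j : ℕ, j ≤ k → ∀ᶠ z in 𝓝[<] y, ((2 * j + 1 : ℕ) : ℕ∞) ≤ f z) ∧
      (∀ j : ℕ, j ≤ l → ∀ᶠ z in 𝓝[>] y, ((2 * j + 1 : ℕ) : ℕ∞) ≤ f z) ∧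
      ∀ j : ℕ, (∀ᶠ z in 𝓝 y, ((2 * j + 1 : ℕ) : ℕ∞) ≤ f z) → j ≤ k ∧ j ≤ l := by
  have antitone_bound (s : Set ℝ) :
      Antitone fun j : ℕ => ∀ᶠ z in 𝓝[s] y, ((2 * j + 1 : ℕ) : ℕ∞) ≤ f z :=
    fun i j hij hj => hj.mono fun z hz => le_trans (by norm_cast; omega) hz
  obtain ⟨i, j, -, hi, hj⟩ := hsplit 0 (by simpa using hf)
  obtain ⟨a, ha⟩ := exists_natCast_le_iff_of_antitone
    (antitone_bound _ i.zero_le hi) (antitone_bound (Iio y))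
  obtain ⟨b, hb⟩ := exists_natCast_le_iff_of_antitone
    (antitone_bound _ j.zero_le hj) (antitone_bound (Ioi y))
  obtain ⟨m, hm⟩ := exists_add_of_le hf
  have hmab : m ≤ a + b := by
    refine ENat.forall_natCast_le_iff_le.1 fun n hn => ?_
    obtain ⟨i, j, rfl, hi, hj⟩ := hsplit n (by rw [hm, add_comm]; push_cast; gcongr)
    push_cast
    exact add_le_add ((ha i).2 hi) ((hb j).2 hj)
  obtain ⟨k, l, rfl, hk, hl, hkl⟩ := exists_balanced_add_eq hmab
  refine ⟨k, l, by rw [hm, add_assoc], fun j hj => (ha j).1 (hj.trans hk),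
    fun j hj => (hb j).1 (hj.trans hl), fun j hj => hkl j ?_ ?_ ?_⟩
  · have := hj.self_of_nhds
    rw [hm, Nat.cast_succ, add_comm 1] at this
    exact (ENat.add_le_add_iff_right ENat.one_ne_top).1 this
  · exact (ha j).2 (hj.filter_mono nhdsWithin_le_nhds)
  · exact (hb j).2 (hj.filter_mono nhdsWithin_le_nhds)

theorem eventually_nhdsWithin_eventually_nhds {X : Type*} [TopologicalSpace X] {s : Set X} {x : X}
    {p : X → Prop} (hs : IsOpen s) (hp : ∀ᶠ z in 𝓝[s] x, p z) :
    ∀ᶠ z in 𝓝[s] x, ∀ᶠ w in 𝓝 z, p w := by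
  filter_upwards [eventually_eventually_nhdsWithin.2 hp, self_mem_nhdsWithin] with z hz hzs
  rwa [hs.nhdsWithin_eq hzs] at hz

/-- A bound `2 * j + 1 ≤ f` on one side of `y` holds in a neighbourhood of every nearby point `z` on
that side, and then the balanced choice of `k z` and `l z` makes both of them at least `j`. -/
theorem exists_layering (hf : ∀ y, 1 ≤ f y)
    (hsplit : ∀ y, ∀ n : ℕ, ((n + 1 : ℕ) : ℕ∞) ≤ f y → OddSplit f (𝓝[<] y) (𝓝[>] y) n) :
    ∃ k l : ℝ → ℕ∞, (∀ y, f y = 1 + k y + l y) ∧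
      (∀ y, ∀ j : ℕ, j ≤ k y → ∀ᶠ z in 𝓝[<] y, j ≤ k z ∧ j ≤ l z) ∧
      ∀ y, ∀ j : ℕ, j ≤ l y → ∀ᶠ z in 𝓝[>] y, j ≤ k z ∧ j ≤ l z := by
  choose k l hkl hk hl hmin using fun y => exists_balanced_side_bounds (hf y) (hsplit y)
  refine ⟨k, l, hkl, fun y j hj => ?_, fun y j hj => ?_⟩
  · exact (eventually_nhdsWithin_eventually_nhds isOpen_Iio (hk y j hj)).mono fun z => hmin z j
  · exact (eventually_nhdsWithin_eventually_nhds isOpen_Ioi (hl y j hj)).mono fun z => hmin z j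

end Multiplicities

section Tilings

/-- A family `T` of intervals `(p.1, p.2)` with disjoint interiors whose left-open versions cover
exactly `L` and whose right-open versions cover exactly `R`. -/
structure IsTiling_s9 (T : Set (ℝ × ℝ)) (L R : Set ℝ) : Prop where
  lt : ∀ p ∈ T, p.1 < p.2
  pairwiseDisjoint_Ioo : T.PairwiseDisjoint fun p => Ioo p.1 p.2
  biUnion_Ioc : ⋃ p ∈ T, Ioc p.1 p.2 = L
  biUnion_Ico : ⋃ p ∈ T, Ico p.1 p.2 = R

variable {T : Set (ℝ × ℝ)} {L R U : Set ℝ} {c d m y : ℝ}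

namespace IsTiling_s9

theorem pairwiseDisjoint_Ioc (h : IsTiling_s9 T L R) :
    T.PairwiseDisjoint fun p => Ioc p.1 p.2 := fun _ hp _ hq hpq =>
  Ioc_disjoint_Ioc.2 (Ioo_disjoint_Ioo.1 (h.pairwiseDisjoint_Ioo hp hq hpq))

theorem pairwiseDisjoint_Ico (h : IsTiling_s9 T L R) :
    T.PairwiseDisjoint fun p => Ico p.1 p.2 := fun _ hp _ hq hpq =>
  Ico_disjoint_Ico.2 (Ioo_disjoint_Ioo.1 (h.pairwiseDisjoint_Ioo hp hq hpq))

theorem countable (h : IsTiling_s9 T L R) : T.Countable :=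
  h.pairwiseDisjoint_Ioo.countable_of_isOpen (fun _ _ => isOpen_Ioo)
    fun p hp => nonempty_Ioo.2 (h.lt p hp)

theorem Ioo_subset (h : IsTiling_s9 T L R) {p : ℝ × ℝ} (hp : p ∈ T) : Ioo p.1 p.2 ⊆ L ∩ R := by
  rw [← h.biUnion_Ioc, ← h.biUnion_Ico]
  exact fun x hx =>
    ⟨mem_biUnion hp (Ioo_subset_Ioc_self hx), mem_biUnion hp (Ioo_subset_Ico_self hx)⟩

theorem iUnion {ι : Type*} {T : ι → Set (ℝ × ℝ)} {L R : ι → Set ℝ}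
    (h : ∀ i, IsTiling_s9 (T i) (L i) (R i))
    (hdisj : Pairwise (Function.onFun Disjoint fun i => L i ∩ R i)) :
    IsTiling_s9 (⋃ i, T i) (⋃ i, L i) (⋃ i, R i) where
  lt p hp := by
    obtain ⟨i, hi⟩ := mem_iUnion.1 hp
    exact (h i).lt p hi
  pairwiseDisjoint_Ioo p hp q hq hpq := by
    obtain ⟨i, hi⟩ := mem_iUnion.1 hp
    obtain ⟨j, hj⟩ := mem_iUnion.1 hq
    rcases eq_or_ne i j with rfl | hij
    · exact (h i).pairwiseDisjoint_Ioo hi hj hpq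
    · exact (hdisj hij).mono ((h i).Ioo_subset hi) ((h j).Ioo_subset hj)
  biUnion_Ioc := by simp_rw [biUnion_iUnion, (h _).biUnion_Ioc]
  biUnion_Ico := by simp_rw [biUnion_iUnion, (h _).biUnion_Ico]

theorem union {T' : Set (ℝ × ℝ)} {L' R' : Set ℝ} (h : IsTiling_s9 T L R) (h' : IsTiling_s9 T' L' R')
    (hdisj : Disjoint (L ∩ R) (L' ∩ R')) : IsTiling_s9 (T ∪ T') (L ∪ L') (R ∪ R') := by
  simp_rw [union_eq_iUnion]
  refine iUnion (fun b => by cases b <;> assumption) ?_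
  rintro (_ | _) (_ | _) hne
  exacts [absurd rfl hne, hdisj.symm, hdisj, absurd rfl hne]

theorem neg (h : IsTiling_s9 T L R) : IsTiling_s9 ((fun p => (-p.2, -p.1)) '' T) (-R) (-L) where
  lt := by
    rintro _ ⟨p, hp, rfl⟩
    exact neg_lt_neg (h.lt p hp)
  pairwiseDisjoint_Ioo := by
    rintro _ ⟨p, hp, rfl⟩ _ ⟨q, hq, rfl⟩ hpq
    have := h.pairwiseDisjoint_Ioo hp hq (by rintro rfl; exact hpq rfl)
    rw [Function.onFun, Ioo_disjoint_Ioo] at this ⊢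
    rw [← neg_le_neg_iff]
    simpa [min_neg_neg, max_neg_neg] using this
  biUnion_Ioc := by simp_rw [biUnion_image, ← h.biUnion_Ico, iUnion_neg, neg_Ico]
  biUnion_Ico := by simp_rw [biUnion_image, ← h.biUnion_Ioc, iUnion_neg, neg_Ioc]

theorem singleton (hmd : m < d) : IsTiling_s9 {(m, d)} (Ioc m d) (Ico m d) where
  lt := by rintro _ rfl; exact hmd
  pairwiseDisjoint_Ioo := pairwiseDisjoint_singleton _ _
  biUnion_Ioc := biUnion_singleton _ _
  biUnion_Ico := biUnion_singleton _ _

theorem range_of_strictMono {u : ℕ → ℝ} (hu : StrictMono u) (hd : Tendsto u atTop (𝓝 d))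
    (hlt : ∀ n, u n < d) :
    IsTiling_s9 (range fun n => (u n, u (n + 1))) (Ioo (u 0) d) (Ico (u 0) d) where
  lt := by
    rintro _ ⟨n, rfl⟩
    exact hu n.lt_succ_self
  pairwiseDisjoint_Ioo := by
    rintro _ ⟨i, rfl⟩ _ ⟨j, rfl⟩ hij
    exact hu.monotone.pairwise_disjoint_on_Ioo_succ (by rintro rfl; exact hij rfl)
  biUnion_Ioc := by
    rw [biUnion_range]
    refine Subset.antisymm (iUnion_subset fun n x hx => ?_) fun x hx => mem_iUnion.2 ?_
    · exact ⟨(hu.monotone n.zero_le).trans_lt hx.1, hx.2.trans_lt (hlt _)⟩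
    · obtain ⟨n, hn, hn'⟩ := Nat.exists_not_and_succ_of_not_zero_of_exists
        (p := fun n => x ≤ u n) hx.1.not_ge (hd.eventually_const_le hx.2).exists
      exact ⟨n, not_le.1 hn, hn'⟩
  biUnion_Ico := by
    rw [biUnion_range]
    refine Subset.antisymm (iUnion_subset fun n x hx => ?_) fun x hx => mem_iUnion.2 ?_
    · exact ⟨(hu.monotone n.zero_le).trans hx.1, hx.2.trans (hlt _)⟩
    · obtain ⟨n, hn, hn'⟩ := Nat.exists_not_and_succ_of_not_zero_of_exists
        (p := fun n => x < u n) hx.1.not_gt (hd.eventually_const_lt hx.2).exists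
      exact ⟨n, not_lt.1 hn, hn'⟩

end IsTiling_s9

theorem exists_seq_strictMono_tendsto_apply_zero_eq (hmd : m < d) :
    ∃ u : ℕ → ℝ, StrictMono u ∧ (∀ n, u n < d) ∧ Tendsto u atTop (𝓝 d) ∧ u 0 = m := by
  have hpos : 0 < d - m := sub_pos.2 hmd
  refine ⟨fun n => d - (d - m) * (1 / 2) ^ n, fun i j hij => ?_, fun n => ?_, ?_, by simp⟩
  · have : (1 / 2 : ℝ) ^ j < (1 / 2) ^ i :=
      pow_right_strictAnti₀ (by norm_num) (by norm_num) hij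
    dsimp only
    gcongr
  · exact sub_lt_self d (mul_pos hpos (by positivity))
  · have := (tendsto_pow_atTop_nhds_zero_of_lt_one (r := (1 / 2 : ℝ)) (by norm_num)
      (by norm_num)).const_mul (d - m)
    simpa using this.const_sub d

theorem exists_isTiling_Ico (hmd : m < d) (hL : Ioo m d ⊆ L) :
    ∃ T, IsTiling_s9 T (L ∩ Ioc m d) (Ico m d) := by
  rw [← Ioo_union_right hmd, inter_union_distrib_left, inter_eq_right.2 hL]
  by_cases hd : d ∈ L
  · rw [inter_singleton_of_mem hd, Ioo_union_right hmd]
    exact ⟨_, .singleton hmd⟩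
  · rw [inter_singleton_of_notMem hd, union_empty]
    obtain ⟨u, hu, hlt, hud, rfl⟩ := exists_seq_strictMono_tendsto_apply_zero_eq hmd
    exact ⟨_, .range_of_strictMono hu hud hlt⟩

theorem exists_isTiling_Ioc (hcm : c < m) (hR : Ioo c m ⊆ R) :
    ∃ T, IsTiling_s9 T (Ioc c m) (R ∩ Ico c m) := by
  obtain ⟨T, hT⟩ := exists_isTiling_Ico (L := -R) (neg_lt_neg hcm) (by
    rw [← neg_Ioo]; exact neg_subset_neg.2 hR)
  exact ⟨_, by simpa using hT.neg⟩

theorem exists_isTiling_Ioo (hcd : c < d) (h : Ioo c d ⊆ L ∩ R) :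
    ∃ T, IsTiling_s9 T (L ∩ Ioc c d) (R ∩ Ico c d) := by
  obtain ⟨m, hcm, hmd⟩ := exists_between hcd
  obtain ⟨T₁, h₁⟩ := exists_isTiling_Ioc hcm
    ((Ioo_subset_Ioo_right hmd.le).trans (h.trans inter_subset_right))
  obtain ⟨T₂, h₂⟩ := exists_isTiling_Ico hmd
    ((Ioo_subset_Ioo_left hcm.le).trans (h.trans inter_subset_left))
  have hdisj : Disjoint (Ioc c m ∩ (R ∩ Ico c m)) (L ∩ Ioc m d ∩ Ico m d) :=
    disjoint_left.2 fun x hx hx' => hx.2.2.2.not_gt hx'.1.2.1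
  have hL : Ioc c m ⊆ L := fun x hx => (h ⟨hx.1, hx.2.trans_lt hmd⟩).1
  have hR : Ico m d ⊆ R := fun x hx => (h ⟨hcm.trans_le hx.1, hx.2⟩).2
  refine ⟨T₁ ∪ T₂, ?_⟩
  rw [← Ioc_union_Ioc_eq_Ioc hcm.le hmd.le, inter_union_distrib_left, inter_eq_right.2 hL,
    ← Ico_union_Ico_eq_Ico hcm.le hmd.le, inter_union_distrib_left, inter_eq_right.2 hR]
  exact h₁.union h₂ hdisj

theorem exists_maximal_Ioo (hU : IsOpen U) (hbdd : Bornology.IsBounded U) (hy : y ∈ U) :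
    ∃ c d, y ∈ Ioo c d ∧ Ioo c d ⊆ U ∧ c ∉ U ∧ d ∉ U := by
  obtain ⟨r, hr, hUr⟩ := hbdd.subset_ball_lt 0 y
  have hadd : y + r ∉ U := fun h => by simpa [abs_of_pos hr] using hUr h
  have hsub : y - r ∉ U := fun h => by simpa [abs_of_pos hr] using hUr h
  have hd := (hU.isClosed_compl.inter isClosed_Ici).isLeast_csInf (s := Uᶜ ∩ Ici y)
    ⟨y + r, hadd, mem_Ici.2 (by linarith)⟩ ⟨y, fun x hx => hx.2⟩
  have hc := (hU.isClosed_compl.inter isClosed_Iic).isGreatest_csSup (s := Uᶜ ∩ Iic y)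
    ⟨y - r, hsub, mem_Iic.2 (by linarith)⟩ ⟨y, fun x hx => hx.2⟩
  have hne {x : ℝ} (hx : x ∉ U) : x ≠ y := fun h => hx (h ▸ hy)
  refine ⟨_, _, ⟨hc.1.2.lt_of_ne (hne hc.1.1), hd.1.2.lt_of_ne' (hne hd.1.1)⟩,
    fun x hx => by_contra fun hxU => ?_, hc.1.1, hd.1.1⟩
  rcases le_total x y with hxy | hxy
  · exact hx.1.not_ge (hc.2 ⟨hxU, hxy⟩)
  · exact hx.2.not_ge (hd.2 ⟨hxU, hxy⟩)

theorem eq_of_maximal_Ioo_of_mem {α : Type*} [LinearOrder α] {U : Set α} {c d c' d' y : α}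
    (hsub : Ioo c d ⊆ U) (hc : c ∉ U) (hd : d ∉ U) (hsub' : Ioo c' d' ⊆ U) (hc' : c' ∉ U)
    (hd' : d' ∉ U) (hy : y ∈ Ioo c d) (hy' : y ∈ Ioo c' d') : c = c' ∧ d = d' :=
  ⟨le_antisymm (not_lt.1 fun h => hc (hsub' ⟨h, hy.1.trans hy'.2⟩))
      (not_lt.1 fun h => hc' (hsub ⟨h, hy'.1.trans hy.2⟩)),
    le_antisymm (not_lt.1 fun h => hd' (hsub ⟨hy.1.trans hy'.2, h⟩))
      (not_lt.1 fun h => hd (hsub' ⟨hy'.1.trans hy.2, h⟩))⟩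

theorem isOpen_inter_of_eventually {α : Type*} [TopologicalSpace α] [LinearOrder α] {L R : Set α}
    (hL : ∀ y ∈ L, ∀ᶠ z in 𝓝[<] y, z ∈ L ∩ R)
    (hR : ∀ y ∈ R, ∀ᶠ z in 𝓝[>] y, z ∈ L ∩ R) : IsOpen (L ∩ R) := by
  refine isOpen_iff_mem_nhds.2 fun y hy => ?_
  rw [← nhdsNE_sup_pure, ← nhdsLT_sup_nhdsGT]
  exact mem_sup.2 ⟨mem_sup.2 ⟨hL y hy.1, hR y hy.2⟩, hy⟩

/-- Each connected component of `L ∩ R` is tiled separately; a point of `L` outside `R` is the right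
end of a component, and a point of `R` outside `L` is a left end. -/
theorem exists_isTiling_s9 (hL : ∀ y ∈ L, ∀ᶠ z in 𝓝[<] y, z ∈ L ∩ R)
    (hR : ∀ y ∈ R, ∀ᶠ z in 𝓝[>] y, z ∈ L ∩ R) (hbdd : Bornology.IsBounded (L ∩ R)) :
    ∃ T, IsTiling_s9 T L R := by
  have hU := isOpen_inter_of_eventually hL hR
  let ι := {p : ℝ × ℝ // p.1 < p.2 ∧ Ioo p.1 p.2 ⊆ L ∩ R ∧ p.1 ∉ L ∩ R ∧ p.2 ∉ L ∩ R}
  choose T hT using fun p : ι => exists_isTiling_Ioo p.2.1 p.2.2.1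
  have hunion := IsTiling_s9.iUnion hT fun p q hpq => disjoint_left.2 fun x hx hx' => hpq <| by
    obtain ⟨⟨c, d⟩, hcd, hsub, hc, hd⟩ := p
    obtain ⟨⟨c', d'⟩, hcd', hsub', hc', hd'⟩ := q
    obtain ⟨rfl, rfl⟩ := eq_of_maximal_Ioo_of_mem hsub hc hd hsub' hc' hd'
      ⟨hx.1.2.1, hx.2.2.2⟩ ⟨hx'.1.2.1, hx'.2.2.2⟩
    rfl
  have hLeq : ⋃ p : ι, L ∩ Ioc p.1.1 p.1.2 = L := by
    refine Subset.antisymm (iUnion_subset fun p => inter_subset_left) fun y hy => ?_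
    obtain ⟨a, hay, ha⟩ := mem_nhdsLT_iff_exists_Ioo_subset.1 (hL y hy)
    obtain ⟨z, hz⟩ := nonempty_Ioo.2 (mem_Iio.1 hay)
    obtain ⟨c, d, hzcd, hsub, hc, hd⟩ := exists_maximal_Ioo hU hbdd (ha hz)
    refine mem_iUnion.2 ⟨⟨(c, d), hzcd.1.trans hzcd.2, hsub, hc, hd⟩, hy, hzcd.1.trans hz.2, ?_⟩
    exact not_lt.1 fun hdy => hd (ha ⟨hz.1.trans hzcd.2, hdy⟩)
  have hReq : ⋃ p : ι, R ∩ Ico p.1.1 p.1.2 = R := by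
    refine Subset.antisymm (iUnion_subset fun p => inter_subset_left) fun y hy => ?_
    obtain ⟨b, hyb, hb⟩ := mem_nhdsGT_iff_exists_Ioo_subset.1 (hR y hy)
    obtain ⟨z, hz⟩ := nonempty_Ioo.2 (mem_Ioi.1 hyb)
    obtain ⟨c, d, hzcd, hsub, hc, hd⟩ := exists_maximal_Ioo hU hbdd (hb hz)
    refine mem_iUnion.2 ⟨⟨(c, d), hzcd.1.trans hzcd.2, hsub, hc, hd⟩, hy, ?_, hz.1.trans hzcd.2⟩
    exact not_lt.1 fun hyc => hc (hb ⟨hyc, hzcd.1.trans hz.2⟩)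
  exact ⟨_, hLeq ▸ hReq ▸ hunion⟩

theorem encard_setOf_add_one_le (k : ℕ∞) : {j : ℕ | ((j + 1 : ℕ) : ℕ∞) ≤ k}.encard = k := by
  induction k using ENat.recTopCoe with
  | top => simp
  | coe k =>
    convert Nat.encard_range k using 3
    norm_cast

theorem encard_setOf_mem_eq {ι α β : Type*} {T : ι → Set α} {S : α → Set β} {L : ι → Set β}
    (hdisj : ∀ i, (T i).PairwiseDisjoint S) (hunion : ∀ i, ⋃ p ∈ T i, S p = L i) (y : β) :
    {q : Σ i, T i | y ∈ S q.2}.encard = {i | y ∈ L i}.encard := by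
  have hinj : InjOn Sigma.fst {q : Σ i, T i | y ∈ S q.2} := by
    rintro ⟨i, p⟩ hp ⟨j, q⟩ hq rfl
    have hpq : p.1 = q.1 := (hdisj i).elim_set p.2 q.2 y hp hq
    rw [Subtype.ext hpq]
  rw [← hinj.encard_image]
  congr 1
  ext i
  simp [← hunion i, mem_iUnion]

theorem exists_intervals_encard_eq {k l : ℝ → ℕ∞}
    (hk : ∀ y, ∀ j : ℕ, j ≤ k y → ∀ᶠ z in 𝓝[<] y, j ≤ k z ∧ j ≤ l z)
    (hl : ∀ y, ∀ j : ℕ, j ≤ l y → ∀ᶠ z in 𝓝[>] y, j ≤ k z ∧ j ≤ l z)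
    (hbdd : Bornology.IsBounded {y | 1 ≤ k y ∧ 1 ≤ l y}) :
    ∃ (ι : Type) (_ : Countable ι) (c d : ι → ℝ), (∀ i, c i < d i) ∧
      (∀ y, {i | y ∈ Ioc (c i) (d i)}.encard = k y) ∧
      ∀ y, {i | y ∈ Ico (c i) (d i)}.encard = l y := by
  choose T hT using fun j : ℕ => exists_isTiling_s9
    (L := {y | ((j + 1 : ℕ) : ℕ∞) ≤ k y}) (R := {y | ((j + 1 : ℕ) : ℕ∞) ≤ l y})
    (fun y => hk y (j + 1)) (fun y => hl y (j + 1))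
    (hbdd.subset fun y hy => ⟨le_trans (by simp) hy.1, le_trans (by simp) hy.2⟩)
  have : ∀ j, Countable (T j) := fun j => (hT j).countable.to_subtype
  refine ⟨Σ j, T j, inferInstance, fun q => q.2.1.1, fun q => q.2.1.2,
    fun q => (hT q.1).lt _ q.2.2, fun y => ?_, fun y => ?_⟩
  · exact (encard_setOf_mem_eq (S := fun p : ℝ × ℝ => Ioc p.1 p.2)
      (fun j => (hT j).pairwiseDisjoint_Ioc) (fun j => (hT j).biUnion_Ioc) y).trans
      (encard_setOf_add_one_le (k y))
  · exact (encard_setOf_mem_eq (S := fun p : ℝ × ℝ => Ico p.1 p.2)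
      (fun j => (hT j).pairwiseDisjoint_Ico) (fun j => (hT j).biUnion_Ico) y).trans
      (encard_setOf_add_one_le (l y))

end Tilings

section Loops

variable {c d p : ℝ}

/-- The unit-speed path that starts at `p`, rises to `d`, falls to `c` and rises back to `p` at
time `2 * (d - c)`. -/
def loopPath (c d p t : ℝ) : ℝ :=
  max (min (p + t) (2 * d - p - t)) (p + t - 2 * (d - c))

theorem loopPath_of_le {t : ℝ} (hcd : c ≤ d) (ht : t ≤ d - p) : loopPath c d p t = p + t := by
  rw [loopPath, min_eq_left (by linarith), max_eq_left (by linarith)]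

theorem loopPath_of_mem {t : ℝ} (ht : t ∈ Icc (d - p) (2 * d - p - c)) :
    loopPath c d p t = 2 * d - p - t := by
  rw [loopPath, min_eq_right (by linarith [ht.1]), max_eq_left (by linarith [ht.2])]

theorem loopPath_of_ge {t : ℝ} (ht : 2 * d - p - c ≤ t) :
    loopPath c d p t = p + t - 2 * (d - c) :=
  max_eq_right ((min_le_right _ _).trans (by linarith))

theorem bijOn_loopPath_falling :
    BijOn (loopPath c d p) (Ico (d - p) (2 * d - p - c)) (Ioc c d) := by
  have heq : EqOn (fun t => 2 * d - p - t) (loopPath c d p) (Ico (d - p) (2 * d - p - c)) :=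
    fun t ht => (loopPath_of_mem (Ico_subset_Icc_self ht)).symm
  refine BijOn.congr ⟨fun t ht => ?_, fun t _ t' _ h => by linarith, fun y hy => ?_⟩ heq
  · exact ⟨by linarith [ht.2], by linarith [ht.1]⟩
  · exact ⟨2 * d - p - y, ⟨by linarith [hy.2], by linarith [hy.1]⟩, by ring⟩

theorem bijOn_loopPath_rising (hc : c ≤ p) (hd : p < d) :
    BijOn (loopPath c d p) (Ioo 0 (d - p) ∪ Icc (2 * d - p - c) (2 * (d - c))) (Ico c d) := by
  have hfirst : BijOn (loopPath c d p) (Ioo 0 (d - p)) (Ioo p d) := by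
    have heq : EqOn (fun t => p + t) (loopPath c d p) (Ioo 0 (d - p)) :=
      fun t ht => (loopPath_of_le (hc.trans hd.le) ht.2.le).symm
    refine BijOn.congr ⟨fun t ht => ?_, fun t _ t' _ h => by linarith, fun y hy => ?_⟩ heq
    · exact ⟨by linarith [ht.1], by linarith [ht.2]⟩
    · exact ⟨y - p, ⟨by linarith [hy.1], by linarith [hy.2]⟩, by ring⟩
  have hsecond : BijOn (loopPath c d p) (Icc (2 * d - p - c) (2 * (d - c))) (Icc c p) := by
    have heq : EqOn (fun t => p + t - 2 * (d - c)) (loopPath c d p)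
        (Icc (2 * d - p - c) (2 * (d - c))) := fun t ht => (loopPath_of_ge ht.1).symm
    refine BijOn.congr ⟨fun t ht => ?_, fun t _ t' _ h => by linarith, fun y hy => ?_⟩ heq
    · exact ⟨by linarith [ht.1], by linarith [ht.2]⟩
    · exact ⟨y - p + 2 * (d - c), ⟨by linarith [hy.1], by linarith [hy.2]⟩, by ring⟩
  rw [← Icc_union_Ioo_eq_Ico hc hd, union_comm (Icc c p)]
  refine hfirst.union hsecond ((injOn_union ?_).2 ⟨hfirst.injOn, hsecond.injOn, ?_⟩)
  · exact disjoint_left.2 fun t ht ht' => by linarith [ht.2, ht'.1]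
  · exact fun t ht t' ht' => ((hsecond.mapsTo ht').2.trans_lt (hfirst.mapsTo ht).1).ne'

/-- A closed path `γ` on `[0, 1]` based at `p` that takes the values in `(c, d)` twice and the
values `c` and `d` once, where time `0` is not counted. -/
structure IsLoop (γ : ℝ → ℝ) (c d p : ℝ) : Prop where
  continuous : Continuous γ
  zero : γ 0 = p
  one : γ 1 = p
  exists_bijOn :
    ∃ A B, Disjoint A B ∧ A ∪ B = Ioc 0 1 ∧ BijOn γ A (Ioc c d) ∧ BijOn γ B (Ico c d)

theorem IsLoop.mapsTo {γ : ℝ → ℝ} (hγ : IsLoop γ c d p) : MapsTo γ (Icc 0 1) (Icc c d) := by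
  obtain ⟨A, B, -, hunion, hA, hB⟩ := hγ.exists_bijOn
  have hIoc : MapsTo γ (Ioc 0 1) (Icc c d) := hunion ▸
    (hA.mapsTo.mono_right Ioc_subset_Icc_self).union_union
      (hB.mapsTo.mono_right Ico_subset_Icc_self) |>.mono_right (union_self _).subset
  intro t ht
  rcases ht.1.eq_or_lt with rfl | ht0
  · rw [hγ.zero, ← hγ.one]
    exact hIoc (right_mem_Ioc.2 one_pos)
  · exact hIoc ⟨ht0, ht.2⟩

theorem exists_isLoop (hp : p ∈ Ioo c d) : ∃ γ, IsLoop γ c d p := by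
  obtain ⟨hc, hd⟩ := hp
  have hpos : 0 < 2 * (d - c) := by linarith
  have hbij : Function.Bijective (2 * (d - c) * ·) := mulLeft_bijective₀ _ hpos.ne'
  have hscale (A : Set ℝ) : BijOn (2 * (d - c) * ·) ((2 * (d - c) * ·) ⁻¹' A) A :=
    ⟨mapsTo_preimage _ _, hbij.injective.injOn, (image_preimage_eq A hbij.surjective).ge⟩
  refine ⟨fun t => loopPath c d p (2 * (d - c) * t), ?_, ?_, ?_, _, _, ?_, ?_,
    bijOn_loopPath_falling.comp (hscale _), (bijOn_loopPath_rising hc.le hd).comp (hscale _)⟩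
  · unfold loopPath
    fun_prop
  · rw [loopPath_of_le (by linarith) (by linarith), mul_zero, add_zero]
  · rw [loopPath_of_ge (by linarith), mul_one, add_sub_cancel_right]
  · refine Disjoint.preimage _ (disjoint_left.2 ?_)
    rintro t ht (ht' | ht')
    · exact ht.1.not_gt ht'.2
    · exact ht.2.not_ge ht'.1
  · have hunion : Ico (d - p) (2 * d - p - c) ∪ (Ioo 0 (d - p) ∪
        Icc (2 * d - p - c) (2 * (d - c))) = Ioc 0 (2 * (d - c)) := by
      rw [union_left_comm, Ico_union_Icc_eq_Icc (by linarith) (by linarith),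
        Ioo_union_Icc_eq_Ioc (by linarith) (by linarith)]
    rw [← preimage_union, hunion, preimage_const_mul_Ioc₀ _ _ hpos, zero_div, div_self hpos.ne']

theorem exists_injective_forall_mem {ι α : Type*} [Countable ι] {s : ι → Set α}
    (hs : ∀ i, (s i).Infinite) : ∃ x : ι → α, Function.Injective x ∧ ∀ i, x i ∈ s i := by
  classical
  obtain ⟨e, he⟩ := exists_injective_nat ι
  choose t hts htcard using fun i => (hs i).exists_subset_card_eq (e i + 1)
  have hall (I : Finset ι) : I.card ≤ (I.biUnion t).card := by
    rcases I.eq_empty_or_nonempty with rfl | hI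
    · simp
    obtain ⟨i, hi, hmax⟩ := I.exists_max_image e hI
    calc I.card = (I.image e).card := (Finset.card_image_of_injective _ he).symm
      _ ≤ (Finset.range (e i + 1)).card := Finset.card_le_card fun n hn => by
        obtain ⟨j, hj, rfl⟩ := Finset.mem_image.1 hn
        exact Finset.mem_range.2 (Nat.lt_succ_of_le (hmax j hj))
      _ = (t i).card := by rw [htcard, Finset.card_range]
      _ ≤ (I.biUnion t).card := Finset.card_le_card (Finset.subset_biUnion_of_mem t hi)
  obtain ⟨x, hx, hxt⟩ := (Finset.all_card_le_biUnion_card_iff_exists_injective t).1 hall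
  exact ⟨x, hx, fun i => hts i (hxt i)⟩

theorem exists_reindex_Ioo {ι : Type*} [Countable ι] {c d : ι → ℝ} (hcd : ∀ i, c i < d i) :
    ∃ (S : Set ℝ) (c' d' : ℝ → ℝ), S.Countable ∧ (∀ x ∈ S, x ∈ Ioo (c' x) (d' x)) ∧
      ∀ P : ℝ → ℝ → Prop, {x ∈ S | P (c' x) (d' x)}.encard = {i | P (c i) (d i)}.encard := by
  obtain ⟨s, hs, hmem⟩ := exists_injective_forall_mem fun i => Ioo_infinite (hcd i)
  refine ⟨range s, Function.extend s c 0, Function.extend s d 0, countable_range s, ?_, ?_⟩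
  · rintro _ ⟨i, rfl⟩
    simpa only [hs.extend_apply] using hmem i
  · intro P
    rw [← hs.encard_image]
    congr 1
    ext x
    constructor
    · rintro ⟨⟨i, rfl⟩, hi⟩
      rw [hs.extend_apply, hs.extend_apply] at hi
      exact ⟨i, hi, rfl⟩
    · rintro ⟨i, hi, rfl⟩
      refine ⟨mem_range_self i, ?_⟩
      rwa [hs.extend_apply, hs.extend_apply]

theorem bijOn_fst_of_forall_bijOn {ι α β : Type*} {S : Set ι} {γ : ι → α → β} {A : ι → Set α}
    {B : ι → Set β} (h : ∀ i ∈ S, BijOn (γ i) (A i) (B i)) (y : β) :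
    BijOn Prod.fst {q : ι × α | q.1 ∈ S ∧ q.2 ∈ A q.1 ∧ γ q.1 q.2 = y} {i ∈ S | y ∈ B i} := by
  refine ⟨?_, ?_, ?_⟩
  · rintro ⟨i, t⟩ ⟨hi, ht, rfl⟩
    exact ⟨hi, (h i hi).mapsTo ht⟩
  · rintro ⟨i, t⟩ ⟨hi, ht, hty⟩ ⟨_, t'⟩ ⟨-, ht', hty'⟩ rfl
    exact Prod.ext rfl ((h i hi).injOn ht ht' (hty.trans hty'.symm))
  · rintro i ⟨hi, hy⟩
    obtain ⟨t, ht, hty⟩ := (h i hi).surjOn hy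
    exact ⟨(i, t), ⟨hi, ht, hty⟩, rfl⟩

end Loops

section Blowup

open Function MeasureTheory ProbabilityTheory

variable {S : Set ℝ}

theorem continuousAt_cdf_iff (μ : Measure ℝ) [IsProbabilityMeasure μ] {x : ℝ} :
    ContinuousAt (cdf μ) x ↔ μ {x} = 0 := by
  have hatom : μ {x} = ENNReal.ofReal (cdf μ x - leftLim (cdf μ) x) := by
    rw [← StieltjesFunction.measure_singleton, measure_cdf]
  rw [hatom, (monotone_cdf μ).continuousAt_iff_leftLim_eq_rightLim, StieltjesFunction.rightLim_eq,
    ENNReal.ofReal_eq_zero, sub_nonpos]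
  exact ⟨Eq.ge, ((monotone_cdf μ).leftLim_le le_rfl).antisymm⟩

theorem exists_monotone_continuousAt_iff (hS : S.Countable) :
    ∃ w : ℝ → ℝ, Monotone w ∧ (∀ x, w x ∈ Icc 0 1) ∧ ∀ x, ContinuousAt w x ↔ x ∉ S := by
  have := hS.to_subtype
  set ν : Measure ℝ := volume + Measure.sum fun x : S => Measure.dirac (x : ℝ) with hν
  have : NeZero ν := ⟨fun h => NeZero.ne (volume : Measure ℝ)
    (Measure.nonpos_iff_eq_zero'.1 ((Measure.le_add_right le_rfl).trans h.le))⟩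
  have hatom (x : ℝ) : ν.toFinite {x} = 0 ↔ x ∉ S := by
    rw [toFinite_apply_eq_zero_iff]
    suffices (∀ a ∈ S, a ≠ x) ↔ x ∉ S by
      simpa [hν, Measure.sum_apply, ENNReal.tsum_eq_zero, indicator_apply]
    exact ⟨fun h hx => h x hx rfl, fun hx a ha => ne_of_mem_of_not_mem ha hx⟩
  refine ⟨cdf ν.toFinite, monotone_cdf _, fun x => ⟨cdf_nonneg _ x, cdf_le_one _ x⟩, fun x => ?_⟩
  rw [continuousAt_cdf_iff, hatom]

theorem exists_strictMono_continuousAt_iff (hS : S.Countable) :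
    ∃ φ : ℝ → ℝ, StrictMono φ ∧ Tendsto φ atBot atBot ∧ Tendsto φ atTop atTop ∧ φ 0 = 0 ∧
      φ 1 = 1 ∧ ∀ x, ContinuousAt φ x ↔ x ∉ S := by
  obtain ⟨w, hw, hw01, hcont⟩ := exists_monotone_continuousAt_iff hS
  have hpos : 0 < 1 + w 1 - w 0 := by linarith [hw zero_le_one]
  refine ⟨fun x => (x + w x - w 0) / (1 + w 1 - w 0), fun x y hxy => ?_, ?_, ?_, by simp,
    div_self hpos.ne', fun x => ?_⟩
  · have := hw hxy.le
    dsimp only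
    gcongr ?_ / _
    linarith
  · refine Tendsto.atBot_div_const hpos (tendsto_atBot_add_const_right _ _ ?_)
    exact tendsto_atBot_add_right_of_ge _ 1 tendsto_id fun x => (hw01 x).2
  · refine Tendsto.atTop_div_const hpos (tendsto_atTop_add_const_right _ _ ?_)
    exact tendsto_atTop_add_right_of_le _ 0 tendsto_id fun x => (hw01 x).1
  · rw [← hcont]
    refine ⟨fun h => ?_, fun h => by fun_prop⟩
    have heq (z : ℝ) : w z = (z + w z - w 0) / (1 + w 1 - w 0) * (1 + w 1 - w 0) - z + w 0 := by
      rw [div_mul_cancel₀ _ hpos.ne']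
      ring
    exact (((h.mul_const _).sub continuousAt_id).add_const (w 0)).congr
      (Eventually.of_forall fun z => (heq z).symm)

theorem exists_mem_Icc_leftLim_rightLim {φ : ℝ → ℝ} (hφ : Monotone φ)
    (hbot : Tendsto φ atBot atBot) (htop : Tendsto φ atTop atTop) (u : ℝ) :
    ∃ x, u ∈ Icc (leftLim φ x) (rightLim φ x) := by
  have hne : {x | φ x ≤ u}.Nonempty := (hbot.eventually_le_atBot u).exists
  obtain ⟨b, hb⟩ := (htop.eventually_gt_atTop u).exists
  have hbdd : BddAbove {x | φ x ≤ u} :=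
    ⟨b, fun x hx => le_of_not_gt fun hbx => (hb.trans_le (hφ hbx.le)).not_ge hx⟩
  refine ⟨sSup {x | φ x ≤ u}, le_of_tendsto (hφ.tendsto_leftLim _) ?_,
    ge_of_tendsto (hφ.tendsto_rightLim _) ?_⟩
  · filter_upwards [self_mem_nhdsWithin] with y hy
    obtain ⟨x, hx, hyx⟩ := exists_lt_of_lt_csSup hne hy
    exact (hφ hyx.le).trans hx
  · filter_upwards [self_mem_nhdsWithin] with y hy
    exact le_of_not_ge fun hyu => (le_csSup hbdd hyu).not_gt hy

/-- A partition of the line into consecutive blocks `[lo x, hi x]`, one for each real `x`, in which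
exactly the blocks of the points of `S` are nondegenerate. -/
structure IsBlowup (S : Set ℝ) (lo hi : ℝ → ℝ) : Prop where
  le : ∀ x, lo x ≤ hi x
  lt_iff : ∀ {x}, lo x < hi x ↔ x ∈ S
  hi_lt_lo : ∀ {x y}, x < y → hi x < lo y
  exists_mem_Icc : ∀ u, ∃ x, u ∈ Icc (lo x) (hi x)

theorem exists_isBlowup (hS : S.Countable) (h0 : 0 ∉ S) (h1 : 1 ∉ S) :
    ∃ lo hi, IsBlowup S lo hi ∧ lo 0 = 0 ∧ lo 1 = 1 := by
  obtain ⟨φ, hφ, hbot, htop, hφ0, hφ1, hcont⟩ := exists_strictMono_continuousAt_iff hS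
  have hle (x : ℝ) : leftLim φ x ≤ rightLim φ x := hφ.monotone.leftLim_le_rightLim le_rfl
  refine ⟨leftLim φ, rightLim φ, ⟨hle, fun {x} => ?_, fun {x y} hxy => ?_,
    exists_mem_Icc_leftLim_rightLim hφ.monotone hbot htop⟩, ?_, ?_⟩
  · rw [(hle x).lt_iff_ne, Ne, ← hφ.monotone.continuousAt_iff_leftLim_eq_rightLim, hcont, not_not]
  · obtain ⟨z, hxz, hzy⟩ := exists_between hxy
    obtain ⟨z', hzz', hz'y⟩ := exists_between hzy
    exact (hφ.monotone.rightLim_le hxz).trans_lt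
      ((hφ hzz').trans_le (hφ.monotone.le_leftLim hz'y))
  · rw [((hcont 0).2 h0).continuousWithinAt.leftLim_eq, hφ0]
  · rw [((hcont 1).2 h1).continuousWithinAt.leftLim_eq, hφ1]

end Blowup

namespace IsBlowup

variable {S : Set ℝ} {lo hi : ℝ → ℝ} {γ : ℝ → ℝ → ℝ} {u x y : ℝ}

theorem eq_of_mem_Icc (h : IsBlowup S lo hi) (hx : u ∈ Icc (lo x) (hi x))
    (hy : u ∈ Icc (lo y) (hi y)) : x = y :=
  le_antisymm (not_lt.1 fun hyx => (hy.2.trans_lt (h.hi_lt_lo hyx)).not_ge hx.1)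
    (not_lt.1 fun hxy => (hx.2.trans_lt (h.hi_lt_lo hxy)).not_ge hy.1)

theorem lo_mem_Icc (h : IsBlowup S lo hi) (x : ℝ) : lo x ∈ Icc (lo x) (hi x) :=
  left_mem_Icc.2 (h.le x)

theorem hi_mem_Icc (h : IsBlowup S lo hi) (x : ℝ) : hi x ∈ Icc (lo x) (hi x) :=
  right_mem_Icc.2 (h.le x)

theorem hi_eq_lo (h : IsBlowup S lo hi) (hx : x ∉ S) : hi x = lo x :=
  ((h.le x).eq_of_not_lt (mt h.lt_iff.1 hx)).symm

theorem strictMono_lo (h : IsBlowup S lo hi) : StrictMono lo :=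
  fun x _ hxy => (h.le x).trans_lt (h.hi_lt_lo hxy)

theorem strictMono_hi (h : IsBlowup S lo hi) : StrictMono hi :=
  fun _ y hxy => (h.hi_lt_lo hxy).trans_le (h.le y)

/-- The function that runs through the path `γ x`, reparametrized from `[0, 1]`, on the block of
`x`. On a degenerate block the time is `0 / 0 = 0`, so the value there is `γ x 0`. -/
def insertLoops (h : IsBlowup S lo hi) (γ : ℝ → ℝ → ℝ) (u : ℝ) : ℝ :=
  let x := (h.exists_mem_Icc u).choose
  γ x ((u - lo x) / (hi x - lo x))

theorem insertLoops_of_mem (h : IsBlowup S lo hi) (hu : u ∈ Icc (lo x) (hi x)) :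
    h.insertLoops γ u = γ x ((u - lo x) / (hi x - lo x)) := by
  rw [insertLoops, h.eq_of_mem_Icc (h.exists_mem_Icc u).choose_spec hu]

theorem insertLoops_lo (h : IsBlowup S lo hi) (h0 : γ x 0 = x) : h.insertLoops γ (lo x) = x := by
  rw [h.insertLoops_of_mem (h.lo_mem_Icc x), sub_self, zero_div, h0]

theorem insertLoops_hi (h : IsBlowup S lo hi) (h0 : γ x 0 = x) (h1 : γ x 1 = x) :
    h.insertLoops γ (hi x) = x := by
  rcases (h.le x).eq_or_lt with heq | hlt
  · rw [← heq, h.insertLoops_lo h0]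
  · rw [h.insertLoops_of_mem (h.hi_mem_Icc x), div_self (sub_pos.2 hlt).ne', h1]

theorem darbouxOn_insertLoops_Icc (h : IsBlowup S lo hi) (hγ : Continuous (γ x)) :
    DarbouxOn (h.insertLoops γ) (Icc (lo x) (hi x)) := by
  refine .of_continuousOn
    (ContinuousOn.congr ?_ fun u hu => h.insertLoops_of_mem hu) ordConnected_Icc
  fun_prop

theorem Icc_subset_image_insertLoops (h : IsBlowup S lo hi) (h0 : ∀ x, γ x 0 = x)
    (h1 : ∀ x, γ x 1 = x) (hxy : x < y) :
    Icc x y ⊆ h.insertLoops γ '' Icc (hi x) (lo y) := by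
  intro z hz
  rcases hz.2.eq_or_lt with rfl | hzy
  · exact ⟨lo z, right_mem_Icc.2 (h.hi_lt_lo hxy).le, h.insertLoops_lo (h0 z)⟩
  · exact ⟨hi z, ⟨h.strictMono_hi.monotone hz.1, (h.hi_lt_lo hzy).le⟩,
      h.insertLoops_hi (h0 z) (h1 z)⟩

theorem darbouxOn_insertLoops (h : IsBlowup S lo hi) (hγ : ∀ x, Continuous (γ x))
    (h0 : ∀ x, γ x 0 = x) (h1 : ∀ x, γ x 1 = x) : DarbouxOn (h.insertLoops γ) univ := by
  intro a _ b _ hab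
  obtain ⟨x, hx⟩ := h.exists_mem_Icc a
  obtain ⟨y, hy⟩ := h.exists_mem_Icc b
  rcases lt_trichotomy x y with hxy | rfl | hyx
  · set F := h.insertLoops γ
    have hhi : F (hi x) = x := h.insertLoops_hi (h0 x) (h1 x)
    have hlo : F (lo y) = y := h.insertLoops_lo (h0 y)
    have hleft := h.darbouxOn_insertLoops_Icc (hγ x) hx (h.hi_mem_Icc x) hx.2
    have hright := h.darbouxOn_insertLoops_Icc (hγ y) (h.lo_mem_Icc y) hy hy.1
    have hmid : uIcc (F (hi x)) (F (lo y)) ⊆ F '' Icc (hi x) (lo y) := by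
      rw [hhi, hlo, uIcc_of_le hxy.le]
      exact h.Icc_subset_image_insertLoops h0 h1 hxy
    have hlt := h.hi_lt_lo hxy
    calc uIcc (F a) (F b)
        ⊆ uIcc (F a) (F (hi x)) ∪ (uIcc (F (hi x)) (F (lo y)) ∪ uIcc (F (lo y)) (F b)) :=
          uIcc_subset_uIcc_union_uIcc.trans
            (union_subset_union_right _ uIcc_subset_uIcc_union_uIcc)
      _ ⊆ F '' Icc a (hi x) ∪ (F '' Icc (hi x) (lo y) ∪ F '' Icc (lo y) b) :=
          union_subset_union hleft (union_subset_union hmid hright)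
      _ = F '' Icc a b := by
          rw [← image_union, ← image_union, Icc_union_Icc_eq_Icc hlt.le hy.1,
            Icc_union_Icc_eq_Icc hx.2 (hlt.le.trans hy.1)]
  · exact h.darbouxOn_insertLoops_Icc (hγ x) hx hy hab
  · exact absurd hab (hy.2.trans_lt ((h.hi_lt_lo hyx).trans_le hx.1)).not_ge

theorem insertLoops_mem_Icc_iff (h : IsBlowup S lo hi) (h0 : ∀ x, γ x 0 = x) {a b : ℝ}
    (hS : S ⊆ Ioo a b) (hγ : ∀ x ∈ S, MapsTo (γ x) (Icc 0 1) (Icc a b)) :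
    h.insertLoops γ u ∈ Icc a b ↔ u ∈ Icc (lo a) (lo b) := by
  obtain ⟨x, hx⟩ := h.exists_mem_Icc u
  have hb : hi b = lo b := h.hi_eq_lo fun hb => (hS hb).2.false
  have hproj : x ∈ Icc a b ↔ u ∈ Icc (lo a) (lo b) := by
    refine ⟨fun hxab => ⟨(h.strictMono_lo.monotone hxab.1).trans hx.1,
      (hx.2.trans (h.strictMono_hi.monotone hxab.2)).trans_eq hb⟩, fun hu => ⟨?_, ?_⟩⟩
    · exact not_lt.1 fun hxa => (hx.2.trans_lt (h.hi_lt_lo hxa)).not_ge hu.1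
    · exact not_lt.1 fun hbx => (hx.1.trans hu.2).not_gt (h.strictMono_lo hbx)
  rw [← hproj]
  by_cases hxS : x ∈ S
  · have hlt := sub_pos.2 (h.lt_iff.2 hxS)
    rw [h.insertLoops_of_mem hx]
    refine iff_of_true (hγ x hxS ⟨?_, ?_⟩) (Ioo_subset_Icc_self (hS hxS))
    · exact div_nonneg (sub_nonneg.2 hx.1) hlt.le
    · exact (div_le_one hlt).2 (sub_le_sub_right hx.2 _)
  · obtain rfl : u = lo x := le_antisymm (hx.2.trans_eq (h.hi_eq_lo hxS)) hx.1
    rw [h.insertLoops_lo (h0 x)]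

/-- The point of the block of `q.1` at which `insertLoops` has run through the path for the
time `q.2`. -/
def blockPoint (lo hi : ℝ → ℝ) (q : ℝ × ℝ) : ℝ :=
  lo q.1 + q.2 * (hi q.1 - lo q.1)

theorem blockPoint_mem_Ioc {t : ℝ} (h : IsBlowup S lo hi) (hx : x ∈ S) (ht : t ∈ Ioc 0 1) :
    blockPoint lo hi (x, t) ∈ Ioc (lo x) (hi x) := by
  have hlt := sub_pos.2 (h.lt_iff.2 hx)
  have hle := mul_le_of_le_one_left hlt.le ht.2
  exact ⟨lt_add_of_pos_right _ (mul_pos ht.1 hlt), by unfold blockPoint; linarith⟩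

theorem insertLoops_blockPoint {t : ℝ} (h : IsBlowup S lo hi) (hx : x ∈ S) (ht : t ∈ Ioc 0 1) :
    h.insertLoops γ (blockPoint lo hi (x, t)) = γ x t := by
  rw [h.insertLoops_of_mem (Ioc_subset_Icc_self (h.blockPoint_mem_Ioc hx ht)), blockPoint,
    add_sub_cancel_left, mul_div_cancel_right₀ _ (sub_pos.2 (h.lt_iff.2 hx)).ne']

theorem injOn_blockPoint (h : IsBlowup S lo hi) : InjOn (blockPoint lo hi) (S ×ˢ Ioc 0 1) := by
  rintro ⟨x, t⟩ ⟨hx, ht⟩ ⟨x', t'⟩ ⟨hx', ht'⟩ heq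
  have hmem := Ioc_subset_Icc_self (h.blockPoint_mem_Ioc hx ht)
  obtain rfl : x = x' := h.eq_of_mem_Icc hmem
    (heq ▸ Ioc_subset_Icc_self (h.blockPoint_mem_Ioc hx' ht'))
  exact congrArg _ (mul_right_cancel₀ (sub_pos.2 (h.lt_iff.2 hx)).ne' (add_left_cancel heq))

theorem preimage_insertLoops_singleton (h : IsBlowup S lo hi) (h0 : ∀ x, γ x 0 = x) (y : ℝ) :
    h.insertLoops γ ⁻¹' {y} =
      insert (lo y) (blockPoint lo hi '' {q | q.1 ∈ S ∧ q.2 ∈ Ioc 0 1 ∧ γ q.1 q.2 = y}) := by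
  refine Subset.antisymm (fun u hu => ?_) (insert_subset (h.insertLoops_lo (h0 y)) ?_)
  · obtain ⟨x, hx⟩ := h.exists_mem_Icc u
    rcases hx.1.eq_or_lt with rfl | hlt
    · rw [mem_preimage, h.insertLoops_lo (h0 x)] at hu
      exact Or.inl (congrArg lo hu)
    · have hpos := sub_pos.2 (hlt.trans_le hx.2)
      rw [mem_preimage, h.insertLoops_of_mem hx] at hu
      refine Or.inr ⟨(x, (u - lo x) / (hi x - lo x)), ⟨h.lt_iff.1 (hlt.trans_le hx.2),
        ⟨div_pos (sub_pos.2 hlt) hpos, (div_le_one hpos).2 (sub_le_sub_right hx.2 _)⟩, hu⟩, ?_⟩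
      rw [blockPoint, div_mul_cancel₀ _ hpos.ne', add_sub_cancel]
  · rintro _ ⟨⟨x, t⟩, ⟨hx, ht, hy⟩, rfl⟩
    exact (h.insertLoops_blockPoint hx ht).trans hy

theorem encard_preimage_insertLoops_singleton (h : IsBlowup S lo hi) (h0 : ∀ x, γ x 0 = x)
    (y : ℝ) : (h.insertLoops γ ⁻¹' {y}).encard =
      1 + {q : ℝ × ℝ | q.1 ∈ S ∧ q.2 ∈ Ioc 0 1 ∧ γ q.1 q.2 = y}.encard := by
  have hinj : InjOn (blockPoint lo hi) {q | q.1 ∈ S ∧ q.2 ∈ Ioc 0 1 ∧ γ q.1 q.2 = y} :=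
    h.injOn_blockPoint.mono fun q hq => mk_mem_prod hq.1 hq.2.1
  rw [h.preimage_insertLoops_singleton h0, encard_insert_of_notMem, add_comm, hinj.encard_image]
  rintro ⟨⟨x, t⟩, ⟨hx, ht, -⟩, heq⟩
  have hmem := h.blockPoint_mem_Ioc hx ht
  rw [heq] at hmem
  obtain rfl := h.eq_of_mem_Icc (Ioc_subset_Icc_self hmem) (h.lo_mem_Icc y)
  exact hmem.1.false

end IsBlowup

section Construction

variable {S : Set ℝ} {c d : ℝ → ℝ} {γ : ℝ → ℝ → ℝ}

theorem exists_setOf_isLoop_eq_union (hγ : ∀ x ∈ S, IsLoop (γ x) (c x) (d x) x) (y : ℝ) :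
    ∃ P Q : Set (ℝ × ℝ), {q | q.1 ∈ S ∧ q.2 ∈ Ioc 0 1 ∧ γ q.1 q.2 = y} = P ∪ Q ∧ Disjoint P Q ∧
      BijOn Prod.fst P {x ∈ S | y ∈ Ioc (c x) (d x)} ∧
      BijOn Prod.fst Q {x ∈ S | y ∈ Ico (c x) (d x)} := by
  choose! A B hdisj hunion hA hB using fun x hx => (hγ x hx).exists_bijOn
  refine ⟨_, _, ?_, ?_, bijOn_fst_of_forall_bijOn hA y, bijOn_fst_of_forall_bijOn hB y⟩
  · ext q
    constructor
    · rintro ⟨hx, ht, hy⟩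
      rw [← hunion _ hx] at ht
      exact ht.imp (fun ht => ⟨hx, ht, hy⟩) fun ht => ⟨hx, ht, hy⟩
    · rintro (⟨hx, ht, hy⟩ | ⟨hx, ht, hy⟩)
      · exact ⟨hx, hunion _ hx ▸ Or.inl ht, hy⟩
      · exact ⟨hx, hunion _ hx ▸ Or.inr ht, hy⟩
  · exact disjoint_left.2 fun q hq hq' => disjoint_left.1 (hdisj _ hq.1) hq.2.1 hq'.2.1

theorem encard_setOf_isLoop_eq (hγ : ∀ x ∈ S, IsLoop (γ x) (c x) (d x) x) (y : ℝ) :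
    {q : ℝ × ℝ | q.1 ∈ S ∧ q.2 ∈ Ioc 0 1 ∧ γ q.1 q.2 = y}.encard =
      {x ∈ S | y ∈ Ioc (c x) (d x)}.encard + {x ∈ S | y ∈ Ico (c x) (d x)}.encard := by
  obtain ⟨P, Q, hPQ, hdisj, hP, hQ⟩ := exists_setOf_isLoop_eq_union hγ y
  rw [hPQ, encard_union_eq hdisj, ← hP.image_eq, ← hQ.image_eq, hP.injOn.encard_image,
    hQ.injOn.encard_image]

theorem countable_setOf_isLoop_eq (hS : S.Countable)
    (hγ : ∀ x ∈ S, IsLoop (γ x) (c x) (d x) x) (y : ℝ) :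
    {q : ℝ × ℝ | q.1 ∈ S ∧ q.2 ∈ Ioc 0 1 ∧ γ q.1 q.2 = y}.Countable := by
  obtain ⟨P, Q, hPQ, -, hP, hQ⟩ := exists_setOf_isLoop_eq_union hγ y
  rw [hPQ]
  exact (hP.mapsTo.countable_of_injOn hP.injOn (hS.mono (sep_subset _ _))).union
    (hQ.mapsTo.countable_of_injOn hQ.injOn (hS.mono (sep_subset _ _)))

theorem exists_darbouxFun_encard_sec (hS : S.Countable) (hcd : ∀ x ∈ S, x ∈ Ioo (c x) (d x))
    (hsub : ∀ x ∈ S, Icc (c x) (d x) ⊆ Icc 0 1) :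
    ∃ F : ℝ → ℝ, DarbouxFun F ∧ MapsTo F (Icc 0 1) (Icc 0 1) ∧ F 0 = 0 ∧ F 1 = 1 ∧
      ∀ y ∈ Icc (0 : ℝ) 1, (Sec F y).Countable ∧ (Sec F y).encard =
        1 + ({x ∈ S | y ∈ Ioc (c x) (d x)}.encard + {x ∈ S | y ∈ Ico (c x) (d x)}.encard) := by
  have hpath (x : ℝ) : ∃ γ : ℝ → ℝ, Continuous γ ∧ γ 0 = x ∧ γ 1 = x ∧
      (x ∈ S → IsLoop γ (c x) (d x) x) := by
    by_cases hx : x ∈ S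
    · obtain ⟨γ, hγ⟩ := exists_isLoop (hcd x hx)
      exact ⟨γ, hγ.continuous, hγ.zero, hγ.one, fun _ => hγ⟩
    · exact ⟨fun _ => x, continuous_const, rfl, rfl, fun h => absurd h hx⟩
  choose γ hcont h0 h1 hloop using hpath
  have hS01 : S ⊆ Ioo 0 1 := fun x hx => by
    have hlt := (hcd x hx).1.trans (hcd x hx).2
    exact ⟨(hsub x hx (left_mem_Icc.2 hlt.le)).1.trans_lt (hcd x hx).1,
      (hcd x hx).2.trans_le (hsub x hx (right_mem_Icc.2 hlt.le)).2⟩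
  obtain ⟨lo, hi, h, hlo0, hlo1⟩ := exists_isBlowup hS (fun h => (hS01 h).1.false)
    fun h => (hS01 h).2.false
  have hiff {u : ℝ} : h.insertLoops γ u ∈ Icc 0 1 ↔ u ∈ Icc 0 1 := by
    rw [h.insertLoops_mem_Icc_iff h0 hS01 fun x hx => (hloop x hx).mapsTo.mono_right (hsub x hx),
      hlo0, hlo1]
  refine ⟨h.insertLoops γ, darbouxFun_iff_darbouxOn.2 fun a _ b _ =>
    h.darbouxOn_insertLoops hcont h0 h1 (mem_univ a) (mem_univ b), fun u => hiff.2,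
    by simpa only [hlo0] using h.insertLoops_lo (h0 0),
    by simpa only [hlo1] using h.insertLoops_lo (h0 1), fun y hy => ?_⟩
  have hsec : Sec (h.insertLoops γ) y = h.insertLoops γ ⁻¹' {y} :=
    Subset.antisymm (fun u hu => hu.2) fun u hu => ⟨hiff.1 (hu ▸ hy), hu⟩
  rw [hsec]
  constructor
  · rw [h.preimage_insertLoops_singleton h0]
    exact ((countable_setOf_isLoop_eq hS hloop y).image _).insert _
  · rw [h.encard_preimage_insertLoops_singleton h0, encard_setOf_isLoop_eq hloop]

end Construction

theorem exists_darbouxFun_of_oddSplit {f : ℝ → ℕ∞} (hf : ∀ y ∈ Icc (0 : ℝ) 1, 1 ≤ f y)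
    (hsplit : ∀ y ∈ Icc (0 : ℝ) 1, ∀ n : ℕ, ((n + 1 : ℕ) : ℕ∞) ≤ f y →
      OddSplit (extendOne f) (𝓝[<] y) (𝓝[>] y) n) :
    ∃ F : ℝ → ℝ, DarbouxFun F ∧ MapsTo F (Icc 0 1) (Icc 0 1) ∧ F 0 = 0 ∧ F 1 = 1 ∧
      ∀ y ∈ Icc (0 : ℝ) 1, (Sec F y).Countable ∧ (Sec F y).encard = f y := by
  obtain ⟨k, l, hfkl, hk, hl⟩ := exists_layering (one_le_extendOne hf)
    fun y n hn => oddSplit_extendOne_of_forall_mem_Icc hf hsplit hn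
  have hzero {y : ℝ} (hy : y ∉ Icc 0 1) : k y = 0 ∧ l y = 0 := by
    have hkl := hfkl y
    rw [extendOne_of_notMem hy, add_assoc, eq_comm] at hkl
    exact add_eq_zero.1
      (ENat.add_right_injective_of_ne_top ENat.one_ne_top (hkl.trans (add_zero 1).symm))
  obtain ⟨ι, _, c₀, d₀, hlt, hcount_Ioc, hcount_Ico⟩ := exists_intervals_encard_eq hk hl
    ((Metric.isBounded_Icc 0 1).subset fun y hy => by_contra fun hy01 => by
      simpa [(hzero hy01).1] using hy.1)
  obtain ⟨S, c, d, hS, hcd, hcount⟩ := exists_reindex_Ioo hlt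
  have hIoc (y : ℝ) : {x ∈ S | y ∈ Ioc (c x) (d x)}.encard = k y :=
    (hcount fun a b => y ∈ Ioc a b).trans (hcount_Ioc y)
  have hIco (y : ℝ) : {x ∈ S | y ∈ Ico (c x) (d x)}.encard = l y :=
    (hcount fun a b => y ∈ Ico a b).trans (hcount_Ico y)
  have hsub : ∀ x ∈ S, Icc (c x) (d x) ⊆ Icc 0 1 := fun x hx => by
    have hxcd := (hcd x hx).1.trans (hcd x hx).2
    refine ordConnected_Icc.out (by_contra fun hc => ?_) (by_contra fun hd => ?_)
    · exact (encard_eq_zero.1 ((hIco (c x)).trans (hzero hc).2)).subset ⟨hx, left_mem_Ico.2 hxcd⟩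
    · exact (encard_eq_zero.1 ((hIoc (d x)).trans (hzero hd).1)).subset ⟨hx, right_mem_Ioc.2 hxcd⟩
  obtain ⟨F, hF, hmaps, h0, h1, hsec⟩ := exists_darbouxFun_encard_sec hS hcd hsub
  refine ⟨F, hF, hmaps, h0, h1, fun y hy => ⟨(hsec y hy).1, ?_⟩⟩
  rw [(hsec y hy).2, hIoc, hIco, ← add_assoc, ← hfkl, extendOne_of_mem hy]

theorem darboux_indicatrix_characterization (f : ℝ → ℕ∞)
    (hf : ∀ y ∈ Set.Icc (0:ℝ) 1, 1 ≤ f y) :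
    (∃ F : ℝ → ℝ, DarbouxFun F ∧
        Set.MapsTo F (Set.Icc 0 1) (Set.Icc 0 1) ∧ F 0 = 0 ∧ F 1 = 1 ∧
        ∀ y ∈ Set.Icc (0:ℝ) 1, (Sec F y).Countable ∧ (Sec F y).encard = f y) ↔
      (Cond1 f ∧ ∀ y ∈ Set.Icc (0:ℝ) 1, f y = ⊤ → CondStar f y) := by
  rw [cond1_and_condStar_iff_oddSplit hf]
  refine ⟨?_, exists_darbouxFun_of_oddSplit hf⟩
  rintro ⟨F, hF, hmaps, h0, h1, hsec⟩ y hy n hn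
  exact oddSplit_extendOne_of_encard_sec (darbouxFun_iff_darbouxOn.1 hF) hmaps h0 h1
    (fun z hz => (hsec z hz).2) hy (hsec y hy).1 hn
end
end
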